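/- arXiv:0906.3881 — 5 statements merged into one kernel-verified Lean document; each statement's English description precedes it below -/
import Mathlib

section
/- For the principal sl2-triple of gl_N there is a conjugating map with symmetric homogeneous components: there exists a map ε : e^reg + h → e^reg + g^{f^reg} such that ε(e^reg + t) is GL_N-conjugate to e^reg + t for every diagonal matrix t, and ε(e^reg + t) = e^reg + Σ_{j ≤ 0} P_j(t), where each P_j : h → f^{(−j)} takes values in the (−j)-th subdiagonal space and is either zero or a homogeneous polynomial map of degree −j+1 which is symmetric in the diagonal entries of t (invariant under any permutation of the eigenvalues of t). -/
/-! For the principal sl2-triple of `gl_N` there is a conjugating map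
`ε(e^reg + t) = e^reg + Σ_{j≤0} P_j(t)` whose homogeneous components `P_j` take values in
the `(−j)`-th subdiagonal and are symmetric in the eigenvalues of `t`. -/

namespace PrincipalSetup

variable (𝕂 : Type*) [Field 𝕂] (N : ℕ)

/-- The regular nilpotent matrix: `e^reg · v_j = v_{j−1}`. -/
def ereg : Matrix (Fin N) (Fin N) 𝕂 :=
  Matrix.of fun r c => if (r : ℕ) + 1 = (c : ℕ) then 1 else 0

/-- The element `f^reg` of the principal sl2-triple: `f^reg · v_j = j(N − j) v_{j+1}`
(`1`-indexed `j`). -/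
def freg : Matrix (Fin N) (Fin N) 𝕂 :=
  Matrix.of fun r c =>
    if (r : ℕ) = (c : ℕ) + 1 then ((((c : ℕ) + 1) * (N - ((c : ℕ) + 1)) : ℕ) : 𝕂) else 0

end PrincipalSetup

open PrincipalSetup

namespace PrincipalProof

open Matrix

section
variable {𝕂 : Type*} [Field 𝕂] {N : ℕ}

/-- Filtration by subdiagonals. -/
def InL (a : ℤ) (A : Matrix (Fin N) (Fin N) 𝕂) : Prop :=
  ∀ r c : Fin N, (r : ℤ) < (c : ℤ) + a → A r c = 0

lemma InL.mono {a b : ℤ} {A : Matrix (Fin N) (Fin N) 𝕂} (h : InL a A) (hb : b ≤ a) : InL b A :=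
  fun r c hrc => h r c (by omega)

lemma InL.add {a : ℤ} {A B : Matrix (Fin N) (Fin N) 𝕂} (hA : InL a A) (hB : InL a B) :
    InL a (A + B) := fun r c h => by simp [hA r c h, hB r c h]

lemma InL.sub {a : ℤ} {A B : Matrix (Fin N) (Fin N) 𝕂} (hA : InL a A) (hB : InL a B) :
    InL a (A - B) := fun r c h => by simp [hA r c h, hB r c h]

lemma InL.smul {a : ℤ} {A : Matrix (Fin N) (Fin N) 𝕂} (x : 𝕂) (hA : InL a A) :
    InL a (x • A) := fun r c h => by simp [hA r c h]

lemma InL.zero {a : ℤ} : InL a (0 : Matrix (Fin N) (Fin N) 𝕂) := fun r c _ => rfl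

lemma InL.sum {ι : Type*} {a : ℤ} {A : ι → Matrix (Fin N) (Fin N) 𝕂} (s : Finset ι)
    (hA : ∀ i ∈ s, InL a (A i)) : InL a (∑ i ∈ s, A i) := fun r c h => by
  rw [Matrix.sum_apply]
  exact Finset.sum_eq_zero fun i hi => hA i hi r c h

lemma InL.mul {a b : ℤ} {A B : Matrix (Fin N) (Fin N) 𝕂} (hA : InL a A) (hB : InL b B) :
    InL (a + b) (A * B) := fun r c h => by
  rw [Matrix.mul_apply]
  refine Finset.sum_eq_zero fun x _ => ?_
  by_cases h1 : (r : ℤ) < x + a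
  · rw [hA r x h1, zero_mul]
  · rw [hB x c (by omega), mul_zero]

lemma InL.mul' {a b m : ℤ} {A B : Matrix (Fin N) (Fin N) 𝕂} (hA : InL a A) (hB : InL b B)
    (h : m ≤ a + b) : InL m (A * B) := (hA.mul hB).mono h

lemma InL.one : InL 0 (1 : Matrix (Fin N) (Fin N) 𝕂) := fun r c h => by
  rw [Matrix.one_apply_ne]
  rintro rfl
  omega

lemma InL.pow {a : ℤ} {A : Matrix (Fin N) (Fin N) 𝕂} (hA : InL a A) (m : ℕ) :
    InL (m * a) (A ^ m) := by
  induction m with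
  | zero => simpa using InL.one
  | succ m ih =>
    rw [pow_succ]
    exact ih.mul' hA (by push_cast; linarith)

lemma InL.eq_zero {a : ℤ} {A : Matrix (Fin N) (Fin N) 𝕂} (hA : InL a A) (h : (N : ℤ) ≤ a) :
    A = 0 := by
  ext r c
  exact hA r c (by have := r.2; omega)

lemma InL.trace {A : Matrix (Fin N) (Fin N) 𝕂} (hA : InL 1 A) : A.trace = 0 :=
  Finset.sum_eq_zero fun i _ => hA i i (by omega)

lemma inL_e : InL (-1) (ereg 𝕂 N) := fun r c h => by
  simp only [ereg, Matrix.of_apply]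
  rw [if_neg (by omega)]

lemma inL_f : InL 1 (freg 𝕂 N) := fun r c h => by
  simp only [freg, Matrix.of_apply]
  rw [if_neg (by omega)]

lemma inL_fpow (k : ℕ) : InL (k : ℤ) (freg 𝕂 N ^ k) := by
  simpa using (inL_f (𝕂 := 𝕂) (N := N)).pow k

lemma inL_epow (k : ℕ) : InL (-k : ℤ) (ereg 𝕂 N ^ k) := by
  simpa using (inL_e (𝕂 := 𝕂) (N := N)).pow k

lemma e_pow_apply (k : ℕ) (r c : Fin N) :
    (ereg 𝕂 N ^ k) r c = if (r : ℕ) + k = c then 1 else 0 := by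
  induction k generalizing r c with
  | zero => simp [Matrix.one_apply, Fin.ext_iff]
  | succ k ih =>
    rw [pow_succ', Matrix.mul_apply]
    simp only [ih]
    simp only [ereg, Matrix.of_apply]
    by_cases h : (r : ℕ) + (k + 1) = c
    · rw [if_pos h, Finset.sum_eq_single (⟨r + 1, by omega⟩ : Fin N)]
      · simp; omega
      · intro b _ hb
        rw [if_neg, zero_mul]
        intro h'
        exact hb (Fin.ext h'.symm)
      · simp
    · rw [if_neg h]
      refine Finset.sum_eq_zero fun x _ => ?_
      by_cases h1 : (r : ℕ) + 1 = x
      · rw [if_neg (c := (x : ℕ) + k = c) (by omega), mul_zero]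
      · rw [if_neg h1, zero_mul]

/-- Entries of powers of `f`. -/
def fcoef (N : ℕ) (c : ℕ) (k : ℕ) : ℕ := ∏ i ∈ Finset.range k, ((c + i + 1) * (N - (c + i + 1)))

lemma f_pow_apply (k : ℕ) (r c : Fin N) :
    (freg 𝕂 N ^ k) r c = if (r : ℕ) = c + k then (fcoef N c k : 𝕂) else 0 := by
  induction k generalizing r c with
  | zero => simp [Matrix.one_apply, Fin.ext_iff, fcoef]
  | succ k ih =>
    rw [pow_succ', Matrix.mul_apply]
    simp only [ih]
    simp only [freg, Matrix.of_apply]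
    by_cases h : (r : ℕ) = c + (k + 1)
    · rw [if_pos h, Finset.sum_eq_single (⟨c + k, by omega⟩ : Fin N)]
      · rw [if_pos (by simp; omega), if_pos rfl, fcoef, fcoef, Finset.prod_range_succ]
        push_cast
        ring
      · intro b _ hb
        rw [if_neg (c := (b : ℕ) = c + k), mul_zero]
        intro h'
        exact hb (Fin.ext h')
      · simp
    · rw [if_neg h]
      refine Finset.sum_eq_zero fun x _ => ?_
      by_cases h1 : (x : ℕ) = c + k
      · rw [if_neg (by omega), zero_mul]
      · rw [if_neg h1, mul_zero]

/-- The pairing of `e^k` and `f^k`. -/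
noncomputable def tau (𝕂 : Type*) [Field 𝕂] (N k : ℕ) : 𝕂 := (ereg 𝕂 N ^ k * freg 𝕂 N ^ k).trace

lemma tau_ne_zero [CharZero 𝕂] {k : ℕ} (hk : k < N) : tau 𝕂 N k ≠ 0 := by
  have h : tau 𝕂 N k = ((∑ r : Fin N, ∑ x : Fin N,
      if (r : ℕ) + k = x then fcoef N r k else 0 : ℕ) : 𝕂) := by
    unfold tau Matrix.trace
    push_cast
    refine Finset.sum_congr rfl fun r _ => ?_
    rw [Matrix.diag_apply, Matrix.mul_apply]
    refine Finset.sum_congr rfl fun x _ => ?_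
    rw [e_pow_apply, f_pow_apply]
    by_cases h : (r : ℕ) + k = x
    · rw [if_pos h, if_pos h.symm, if_pos h, one_mul]
    · rw [if_neg h, if_neg h, zero_mul]
  rw [h, Nat.cast_ne_zero]
  have h0 : 0 < fcoef N 0 k := by
    refine Finset.prod_pos fun i hi => ?_
    have := Finset.mem_range.1 hi
    exact Nat.mul_pos (by omega) (by omega)
  have h1 := Finset.single_le_sum (f := fun r : Fin N => ∑ x : Fin N,
      if (r : ℕ) + k = x then fcoef N r k else 0) (fun _ _ => Nat.zero_le _)
      (Finset.mem_univ (⟨0, by omega⟩ : Fin N))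
  have h2 := Finset.single_le_sum (f := fun x : Fin N =>
      if 0 + k = (x : ℕ) then fcoef N 0 k else 0) (fun _ _ => Nat.zero_le _)
      (Finset.mem_univ (⟨k, hk⟩ : Fin N))
  simp only [zero_add, if_true] at h1 h2
  omega

/-- The partial slice element. -/
noncomputable def S (𝕂 : Type*) [Field 𝕂] (N k : ℕ) (c : ℕ → 𝕂) : Matrix (Fin N) (Fin N) 𝕂 :=
  ereg 𝕂 N + ∑ i ∈ Finset.range k, c i • freg 𝕂 N ^ i

lemma S_sub_e (k : ℕ) (c : ℕ → 𝕂) : InL 0 (S 𝕂 N k c - ereg 𝕂 N) := by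
  rw [S, add_sub_cancel_left]
  exact InL.sum _ fun i _ => ((inL_fpow i).smul _).mono (by omega)

lemma inL_of_sub_e {A : Matrix (Fin N) (Fin N) 𝕂} (h : InL 0 (A - ereg 𝕂 N)) : InL (-1) A := by
  have := (h.mono (b := -1) (by omega)).add inL_e
  simpa using this

lemma pow_sub_e {A : Matrix (Fin N) (Fin N) 𝕂} (h : InL 0 (A - ereg 𝕂 N)) (j : ℕ) :
    InL (1 - j : ℤ) (A ^ j - ereg 𝕂 N ^ j) := by
  induction j with
  | zero => simpa using InL.zero
  | succ j ih =>
    have : A ^ (j + 1) - ereg 𝕂 N ^ (j + 1)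
        = A * (A ^ j - ereg 𝕂 N ^ j) + (A - ereg 𝕂 N) * ereg 𝕂 N ^ j := by
      rw [pow_succ', pow_succ']; noncomm_ring
    rw [this]
    exact ((inL_of_sub_e h).mul' ih (by push_cast; omega)).add
      (h.mul' (inL_epow j) (by push_cast; omega))

lemma pow_sub_pow {A B D : Matrix (Fin N) (Fin N) 𝕂} (k : ℕ) (hA : InL 0 (A - ereg 𝕂 N))
    (hB : InL 0 (B - ereg 𝕂 N)) (hD : InL k D) (hABD : InL (k + 1) (A - B - D)) (j : ℕ) :
    ∃ R, InL (k + 2 - j : ℤ) R ∧ A ^ j - B ^ j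
      = (∑ i ∈ Finset.range j, ereg 𝕂 N ^ i * D * ereg 𝕂 N ^ (j - 1 - i)) + R := by
  induction j with
  | zero => exact ⟨0, InL.zero, by simp⟩
  | succ j ih =>
    obtain ⟨R, hR, h⟩ := ih
    set e := ereg 𝕂 N
    have hS : InL (k + 1 - j : ℤ) (∑ i ∈ Finset.range j, e ^ i * D * e ^ (j - 1 - i)) := by
      refine InL.sum _ fun i hi => ?_
      have := Finset.mem_range.1 hi
      exact (((inL_epow i).mul hD).mul (inL_epow (j - 1 - i))).mono (by omega)
    refine ⟨(A - e) * (∑ i ∈ Finset.range j, e ^ i * D * e ^ (j - 1 - i)) + A * R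
      + (A - B - D) * B ^ j + D * (B ^ j - e ^ j), ?_, ?_⟩
    · refine (((hA.mul' hS (by push_cast; omega)).add
        ((inL_of_sub_e hA).mul' hR (by push_cast; omega))).add
        (hABD.mul' ((inL_of_sub_e hB).pow j) (by push_cast; omega))).add
        (hD.mul' (pow_sub_e hB j) (by push_cast; omega))
    · have h1 : A ^ (j + 1) - B ^ (j + 1) = A * (A ^ j - B ^ j) + (A - B) * B ^ j := by
        rw [pow_succ', pow_succ']; noncomm_ring
      have h2 : ∑ i ∈ Finset.range (j + 1), e ^ i * D * e ^ (j + 1 - 1 - i)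
          = e * (∑ i ∈ Finset.range j, e ^ i * D * e ^ (j - 1 - i)) + D * e ^ j := by
        rw [Finset.sum_range_succ', Finset.mul_sum]
        congr 1
        · refine Finset.sum_congr rfl fun i hi => ?_
          have : j + 1 - 1 - (i + 1) = j - 1 - i := by omega
          rw [this, pow_succ']
          noncomm_ring
        · simp
      rw [h1, h2, h]
      noncomm_ring

lemma trace_S {k n : ℕ} (hk : k < n) (c : ℕ → 𝕂) :
    (S 𝕂 N n c ^ (k + 1)).trace
      = (S 𝕂 N k c ^ (k + 1)).trace + (k + 1) * tau 𝕂 N k * c k := by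
  have hD : InL (k : ℤ) (c k • freg 𝕂 N ^ k) := (inL_fpow k).smul _
  have hAB : InL (k + 1 : ℤ) (S 𝕂 N n c - S 𝕂 N k c - c k • freg 𝕂 N ^ k) := by
    have : S 𝕂 N n c - S 𝕂 N k c - c k • freg 𝕂 N ^ k
        = ∑ i ∈ Finset.Ico (k + 1) n, c i • freg 𝕂 N ^ i := by
      rw [S, S, ← Finset.sum_range_add_sum_Ico _ (show k + 1 ≤ n from hk), Finset.sum_range_succ]
      abel
    rw [this]
    refine InL.sum _ fun i hi => ((inL_fpow i).smul _).mono ?_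
    have := (Finset.mem_Ico.1 hi).1
    omega
  obtain ⟨R, hR, h⟩ := pow_sub_pow k (S_sub_e n c) (S_sub_e k c) hD hAB (k + 1)
  have hR' : R.trace = 0 := (hR.mono (by push_cast; omega)).trace
  have := congrArg Matrix.trace h
  rw [Matrix.trace_sub, Matrix.trace_add, hR', add_zero, Matrix.trace_sum] at this
  rw [sub_eq_iff_eq_add'.1 this]
  congr 1
  rw [Finset.sum_congr rfl (g := fun _ => tau 𝕂 N k * c k)]
  · simp; ring
  · intro i hi
    have := Finset.mem_range.1 hi
    rw [Matrix.trace_mul_comm, ← mul_assoc, ← pow_add, show k + 1 - 1 - i + i = k by omega,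
      Matrix.mul_smul, Matrix.trace_smul, smul_eq_mul, mul_comm, tau]

/-- Solving `[n, e] = c f^k - b` on the `k`-th subdiagonal. -/
lemma solve [CharZero 𝕂] {k : ℕ} (hk : k < N) {B : Matrix (Fin N) (Fin N) 𝕂} (hB : InL k B) :
    ∃ (n : Matrix (Fin N) (Fin N) 𝕂) (x : 𝕂), InL (k + 1) n ∧
      InL (k + 1) (n * ereg 𝕂 N - ereg 𝕂 N * n + B - x • freg 𝕂 N ^ k) := by
  set x : 𝕂 := (ereg 𝕂 N ^ k * B).trace / tau 𝕂 N k with hx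
  set M := B - x • freg 𝕂 N ^ k with hM
  have hML : InL k M := hB.sub ((inL_fpow k).smul _)
  have htr : (ereg 𝕂 N ^ k * M).trace = 0 := by
    rw [hM, mul_sub, Matrix.trace_sub, Matrix.mul_smul, Matrix.trace_smul, smul_eq_mul, hx]
    change _ - _ / tau 𝕂 N k * tau 𝕂 N k = 0
    rw [div_mul_cancel₀ _ (tau_ne_zero hk), sub_self]
  set b : ℕ → 𝕂 := fun i => if h : i + k < N then M ⟨i + k, h⟩ ⟨i, by omega⟩ else 0 with hb
  have hbsum : ∑ i ∈ Finset.range N, b i = 0 := by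
    rw [← htr, Matrix.trace, ← Fin.sum_univ_eq_sum_range]
    refine Finset.sum_congr rfl fun r _ => ?_
    rw [Matrix.diag_apply, Matrix.mul_apply]
    simp only [e_pow_apply, hb]
    split_ifs with h
    · rw [Finset.sum_eq_single (⟨r + k, h⟩ : Fin N)]
      · simp
      · intro y _ hy
        rw [if_neg, zero_mul]
        intro h'
        exact hy (Fin.ext h'.symm)
      · simp
    · symm
      refine Finset.sum_eq_zero fun y _ => ?_
      rw [if_neg (by have := y.2; omega), zero_mul]
  have hbsum' : ∑ i ∈ Finset.range (N - k), b i = 0 := by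
    rw [← hbsum]
    refine Finset.sum_subset (by intro y; simp; omega) fun y _ hy => ?_
    simp only [hb]
    rw [dif_neg]
    simp at hy
    omega
  set n : Matrix (Fin N) (Fin N) 𝕂 := Matrix.of fun r c =>
    if (r : ℕ) = c + k + 1 then ∑ i ∈ Finset.range (c + 1), b i else 0 with hn
  have hnL : InL (k + 1) n := fun r c h => by
    simp only [hn, Matrix.of_apply]
    rw [if_neg (by omega)]
  refine ⟨n, x, hnL, ?_⟩
  rw [add_sub_assoc, ← hM]
  intro r c hrc
  by_cases hlt : (r : ℤ) < c + k
  · exact (((hnL.mul' inL_e (by omega)).sub (inL_e.mul' hnL (by omega))).add hML) r c hlt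
  have hr : (r : ℕ) = c + k := by omega
  have h1 : (n * ereg 𝕂 N) r c = ∑ i ∈ Finset.range c, b i := by
    rw [Matrix.mul_apply]
    simp only [hn, ereg, Matrix.of_apply]
    by_cases hc : (c : ℕ) = 0
    · rw [hc, Finset.range_zero, Finset.sum_empty]
      refine Finset.sum_eq_zero fun y _ => ?_
      rw [if_neg (c := (y : ℕ) + 1 = 0) (by omega), mul_zero]
    · have hc2 := c.2
      rw [Finset.sum_eq_single (⟨c - 1, by omega⟩ : Fin N)]
      · rw [if_pos (by simp only []; omega), if_pos (by simp only []; omega), mul_one]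
        simp only []
        rw [show (c : ℕ) - 1 + 1 = c by omega]
      · intro y _ hy
        rw [if_neg (c := (y : ℕ) + 1 = c), mul_zero]
        intro h'
        exact hy (Fin.ext (by simp only []; omega))
      · simp
  have h2 : (ereg 𝕂 N * n) r c = ∑ i ∈ Finset.range (c + 1), b i := by
    rw [Matrix.mul_apply]
    simp only [hn, ereg, Matrix.of_apply]
    by_cases hc : (r : ℕ) + 1 < N
    · rw [Finset.sum_eq_single (⟨r + 1, hc⟩ : Fin N)]
      · rw [if_pos (by simp only []), if_pos (by simp only []; omega), one_mul]
      · intro y _ hy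
        rw [if_neg, zero_mul]
        intro h'
        exact hy (Fin.ext h'.symm)
      · simp
    · have := r.2
      rw [show (c : ℕ) + 1 = N - k by omega, hbsum']
      refine Finset.sum_eq_zero fun y _ => ?_
      rw [if_neg (by have := y.2; omega), zero_mul]
  rw [Matrix.add_apply, Matrix.sub_apply, h1, h2, Finset.sum_range_succ]
  have h3 : b c = M r c := by
    simp only [hb]
    rw [dif_pos (by have := r.2; omega)]
    congr 1
    exact Fin.ext hr.symm
  rw [h3]
  ring

lemma inL_cancel {a : ℤ} {B n : Matrix (Fin N) (Fin N) 𝕂} (hn : InL 1 n)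
    (h : InL a (B * (1 + n))) : InL a B := by
  have key : ∀ j : ℕ, InL (min a (-N + j)) B := by
    intro j
    induction j with
    | zero =>
      intro r c hrc
      have := c.2
      omega
    | succ j ih =>
      have : B = B * (1 + n) - B * n := by noncomm_ring
      rw [this]
      exact (h.mono (by omega)).sub (ih.mul' hn (by push_cast; omega))
  exact (key (a + N).toNat).mono (by omega)

lemma exists_slice [CharZero 𝕂] (d : Fin N → 𝕂) (k : ℕ) (hk : k ≤ N) :
    ∃ (c : ℕ → 𝕂) (B : Matrix (Fin N) (Fin N) 𝕂) (g : (Matrix (Fin N) (Fin N) 𝕂)ˣ),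
      InL k B ∧ S 𝕂 N k c + B = (g : Matrix (Fin N) (Fin N) 𝕂) *
        (ereg 𝕂 N + Matrix.diagonal d) * ((g⁻¹ : (Matrix (Fin N) (Fin N) 𝕂)ˣ) :
          Matrix (Fin N) (Fin N) 𝕂) := by
  induction k with
  | zero =>
    refine ⟨0, Matrix.diagonal d, 1, ?_, by simp [S]⟩
    intro r c h
    rw [Matrix.diagonal_apply_ne]
    rintro rfl
    simp at h
  | succ k ih =>
    obtain ⟨c, B, g, hB, hg⟩ := ih (by omega)
    obtain ⟨n, x, hn, hx⟩ := solve (show k < N by omega) hB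
    have hn1 : InL 1 n := hn.mono (by omega)
    have hnil : IsNilpotent n := ⟨N, (hn1.pow N).eq_zero (by simp)⟩
    obtain ⟨u, hu⟩ := hnil.isUnit_one_add
    set c' : ℕ → 𝕂 := Function.update c k x with hc'
    have hS : S 𝕂 N (k + 1) c' = S 𝕂 N k c + x • freg 𝕂 N ^ k := by
      rw [S, S, Finset.sum_range_succ, add_assoc]
      congr 2
      · refine Finset.sum_congr rfl fun i hi => ?_
        rw [hc', Function.update_of_ne (Finset.mem_range.1 hi).ne]
      · rw [hc', Function.update_self]
    set Y : Matrix (Fin N) (Fin N) 𝕂 := (u : Matrix (Fin N) (Fin N) 𝕂) * (S 𝕂 N k c + B) *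
      ((u⁻¹ : (Matrix (Fin N) (Fin N) 𝕂)ˣ) : Matrix (Fin N) (Fin N) 𝕂) with hY
    refine ⟨c', Y - S 𝕂 N (k + 1) c', u * g, ?_, ?_⟩
    · refine inL_cancel hn1 ?_
      have h1 : Y * (1 + n) = (1 + n) * (S 𝕂 N k c + B) := by
        rw [← hu, hY, Units.inv_mul_cancel_right]
      rw [sub_mul, h1, hS]
      have h2 : (1 + n) * (S 𝕂 N k c + B) - (S 𝕂 N k c + x • freg 𝕂 N ^ k) * (1 + n)
          = (n * ereg 𝕂 N - ereg 𝕂 N * n + B - x • freg 𝕂 N ^ k)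
            + (n * (S 𝕂 N k c - ereg 𝕂 N) - (S 𝕂 N k c - ereg 𝕂 N) * n)
            + (n * B - (x • freg 𝕂 N ^ k) * n) := by
        noncomm_ring
      rw [h2]
      push_cast
      exact (hx.add ((hn.mul' (S_sub_e k c) (by omega)).sub
        ((S_sub_e k c).mul' hn (by omega)))).add ((hn.mul' hB (by omega)).sub
          (((inL_fpow k).smul x).mul' hn (by omega)))
    · rw [add_sub_cancel, hY, hg]
      simp [mul_assoc]

lemma trace_ed (d : Fin N → 𝕂) (m : ℕ) :
    ((ereg 𝕂 N + Matrix.diagonal d) ^ m).trace = ∑ i, d i ^ m := by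
  have hd : InL 0 (Matrix.diagonal d) := by
    intro r c h
    rw [Matrix.diagonal_apply_ne]
    rintro rfl
    simp at h
  have he : InL 1 (ereg 𝕂 N)ᵀ := by
    intro r c h
    simp only [Matrix.transpose_apply, ereg, Matrix.of_apply]
    rw [if_neg (by omega)]
  have hA : InL 0 ((ereg 𝕂 N)ᵀ + Matrix.diagonal d) := (he.mono (by omega)).add hd
  have key : InL 1 (((ereg 𝕂 N)ᵀ + Matrix.diagonal d) ^ m - Matrix.diagonal d ^ m) := by
    induction m with
    | zero => simpa using InL.zero
    | succ m ih =>
      have : ((ereg 𝕂 N)ᵀ + Matrix.diagonal d) ^ (m + 1) - Matrix.diagonal d ^ (m + 1)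
        = ((ereg 𝕂 N)ᵀ + Matrix.diagonal d) *
          (((ereg 𝕂 N)ᵀ + Matrix.diagonal d) ^ m - Matrix.diagonal d ^ m)
          + (ereg 𝕂 N)ᵀ * Matrix.diagonal d ^ m := by
        rw [pow_succ', pow_succ']; noncomm_ring
      rw [this]
      exact (hA.mul' ih (by omega)).add (he.mul' (hd.pow m) (by simp))
  have := key.trace
  rw [Matrix.trace_sub, sub_eq_zero, Matrix.diagonal_pow, Matrix.trace_diagonal] at this
  rw [← Matrix.trace_transpose, Matrix.transpose_pow, Matrix.transpose_add,
    Matrix.diagonal_transpose, this]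
  rfl

lemma trace_semiconj {g A B : Matrix (Fin N) (Fin N) 𝕂} (hg : IsUnit g) (h : g * A = B * g)
    (m : ℕ) : (B ^ m).trace = (A ^ m).trace := by
  obtain ⟨u, rfl⟩ := hg
  have h1 : SemiconjBy (u : Matrix (Fin N) (Fin N) 𝕂) A B := h
  have h2 := (h1.pow_right m).eq
  rw [← Units.mul_inv_cancel_right (B ^ m) u, ← h2, Matrix.trace_mul_comm,
    Units.inv_mul_cancel_left]

/-- The coefficient polynomials. -/
noncomputable def Cf (𝕂 : Type*) [Field 𝕂] (N : ℕ) (d : Fin N → 𝕂) (k : ℕ) : 𝕂 :=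
  ((∑ i, d i ^ (k + 1)) - ((ereg 𝕂 N +
    ∑ i : Fin k, Cf 𝕂 N d i.1 • freg 𝕂 N ^ i.1) ^ (k + 1)).trace) / ((k + 1) * tau 𝕂 N k)
termination_by k
decreasing_by exact i.2

lemma Cf_eq (d : Fin N → 𝕂) (k : ℕ) : Cf 𝕂 N d k =
    ((∑ i, d i ^ (k + 1)) - (S 𝕂 N k (Cf 𝕂 N d) ^ (k + 1)).trace) / ((k + 1) * tau 𝕂 N k) := by
  rw [Cf, S, Finset.sum_range (fun i => Cf 𝕂 N d i • freg 𝕂 N ^ i)]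

lemma S_congr {k : ℕ} {c c' : ℕ → 𝕂} (h : ∀ i < k, c i = c' i) : S 𝕂 N k c = S 𝕂 N k c' := by
  rw [S, S]
  congr 1
  exact Finset.sum_congr rfl fun i hi => by rw [h i (Finset.mem_range.1 hi)]

lemma Cf_symm (d : Fin N → 𝕂) (σ : Equiv.Perm (Fin N)) (k : ℕ) :
    Cf 𝕂 N (d ∘ σ) k = Cf 𝕂 N d k := by
  induction k using Nat.strong_induction_on with
  | _ k ih =>
    rw [Cf_eq, Cf_eq, S_congr ih]
    congr 2
    exact Equiv.sum_comp σ (fun i => d i ^ (k + 1))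

lemma Cf_zero (k : ℕ) : Cf 𝕂 N 0 k = 0 := by
  induction k using Nat.strong_induction_on with
  | _ k ih =>
    rw [Cf_eq, S_congr (c' := 0) ih]
    have : (S 𝕂 N k 0 ^ (k + 1)).trace = 0 := by
      simp only [S, Pi.zero_apply, zero_smul, Finset.sum_const_zero, add_zero]
      refine Finset.sum_eq_zero fun i _ => ?_
      rw [Matrix.diag_apply, e_pow_apply, if_neg (by omega)]
    rw [this]
    simp

lemma Cf_homog (d : Fin N → 𝕂) (lam : 𝕂) (k : ℕ) :
    Cf 𝕂 N (lam • d) k = lam ^ (k + 1) * Cf 𝕂 N d k := by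
  by_cases hl : lam = 0
  · rw [hl, zero_smul, Cf_zero]
    simp
  induction k using Nat.strong_induction_on with
  | _ k ih =>
    rw [Cf_eq, Cf_eq, S_congr ih, ← mul_div_assoc, mul_sub, Finset.mul_sum]
    congr 2
    · exact Finset.sum_congr rfl fun i _ => by simp [mul_pow]
    · rw [trace_semiconj (g := Matrix.diagonal fun r : Fin N => lam ^ (r : ℕ))
        (A := lam • S 𝕂 N k (Cf 𝕂 N d)), smul_pow, Matrix.trace_smul, smul_eq_mul]
      · rw [Matrix.isUnit_iff_isUnit_det, Matrix.det_diagonal, isUnit_iff_ne_zero]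
        exact Finset.prod_ne_zero_iff.2 fun i _ => pow_ne_zero _ hl
      · ext r c
        rw [Matrix.diagonal_mul, Matrix.mul_diagonal, Matrix.smul_apply, smul_eq_mul]
        simp only [S, Matrix.add_apply, Matrix.sum_apply, Matrix.smul_apply, smul_eq_mul]
        rw [mul_add, mul_add, add_mul, Finset.mul_sum, Finset.mul_sum, Finset.sum_mul]
        congr 1
        · simp only [ereg, Matrix.of_apply]
          split_ifs with h
          · rw [← h]; ring
          · simp
        · refine Finset.sum_congr rfl fun i _ => ?_
          rw [f_pow_apply]
          split_ifs with h
          · rw [h]; ring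
          · simp

lemma Cf_poly (k : ℕ) : ∃ q : MvPolynomial (Fin N) 𝕂, ∀ d, Cf 𝕂 N d k = MvPolynomial.eval d q := by
  induction k using Nat.strong_induction_on with
  | _ k ih =>
    choose! q hq using ih
    let T : Matrix (Fin N) (Fin N) (MvPolynomial (Fin N) 𝕂) :=
      (ereg 𝕂 N).map MvPolynomial.C +
        ∑ i ∈ Finset.range k, q i • (freg 𝕂 N ^ i).map MvPolynomial.C
    refine ⟨((∑ i, MvPolynomial.X i ^ (k + 1)) - (T ^ (k + 1)).trace) *
      MvPolynomial.C ((k + 1) * tau 𝕂 N k)⁻¹, fun d => ?_⟩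
    have hT : (MvPolynomial.eval d).mapMatrix T = S 𝕂 N k (Cf 𝕂 N d) := by
      ext r c
      simp only [T, S, RingHom.mapMatrix_apply, Matrix.map_apply, Matrix.add_apply,
        Matrix.sum_apply, Matrix.smul_apply, smul_eq_mul, map_add, map_sum, map_mul,
        MvPolynomial.eval_C]
      congr 1
      exact Finset.sum_congr rfl fun i hi => by rw [hq i (Finset.mem_range.1 hi)]
    have htr : MvPolynomial.eval d (T ^ (k + 1)).trace
        = (S 𝕂 N k (Cf 𝕂 N d) ^ (k + 1)).trace := by
      rw [← hT, ← map_pow, RingHom.mapMatrix_apply, Matrix.trace, Matrix.trace, map_sum]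
      rfl
    rw [Cf_eq, map_mul, map_sub, htr, MvPolynomial.eval_C, div_eq_mul_inv]
    simp

lemma conj_slice [CharZero 𝕂] (d : Fin N → 𝕂) :
    ∃ g : (Matrix (Fin N) (Fin N) 𝕂)ˣ, S 𝕂 N N (Cf 𝕂 N d) =
      (g : Matrix (Fin N) (Fin N) 𝕂) * (ereg 𝕂 N + Matrix.diagonal d) *
        ((g⁻¹ : (Matrix (Fin N) (Fin N) 𝕂)ˣ) : Matrix (Fin N) (Fin N) 𝕂) := by
  obtain ⟨c, B, g, hB, hg⟩ := exists_slice d N le_rfl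
  rw [hB.eq_zero le_rfl, add_zero] at hg
  refine ⟨g, ?_⟩
  rw [← hg]
  refine S_congr fun k => ?_
  induction k using Nat.strong_induction_on with
  | _ k ih =>
    intro hk
    have h1 : (S 𝕂 N N c ^ (k + 1)).trace = ∑ i, d i ^ (k + 1) := by
      rw [← trace_ed]
      refine trace_semiconj g.isUnit ?_ _
      rw [hg, Units.inv_mul_cancel_right]
    rw [trace_S hk] at h1
    rw [Cf_eq, S_congr (fun i hi => ih i hi (hi.trans hk)), ← h1, add_sub_cancel_left,
      mul_div_cancel_left₀]
    exact mul_ne_zero (Nat.cast_add_one_ne_zero k) (tau_ne_zero hk)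

lemma sum_P (d : Fin N → 𝕂) (P : ℤ → Matrix (Fin N) (Fin N) 𝕂)
    (hP : ∀ j ≤ 0, P j = Cf 𝕂 N d (-j).toNat • freg 𝕂 N ^ (-j).toNat) :
    ∑ j ∈ Finset.Icc (-(N : ℤ)) 0, P j = ∑ i ∈ Finset.range N, Cf 𝕂 N d i • freg 𝕂 N ^ i := by
  have h0 : freg 𝕂 N ^ N = 0 := (inL_fpow N).eq_zero le_rfl
  have h1 : ∑ i ∈ Finset.range N, Cf 𝕂 N d i • freg 𝕂 N ^ i
      = ∑ i ∈ Finset.range (N + 1), Cf 𝕂 N d i • freg 𝕂 N ^ i := by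
    rw [Finset.sum_range_succ, h0, smul_zero, add_zero]
  rw [h1]
  refine Finset.sum_bij' (fun j _ => (-j).toNat) (fun i _ => -(i : ℤ)) ?_ ?_ ?_ ?_ ?_
  · intro j hj
    have := Finset.mem_Icc.1 hj
    simp; omega
  · intro i hi
    have := Finset.mem_range.1 hi
    simp; omega
  · intro j hj
    have := Finset.mem_Icc.1 hj
    omega
  · intro i hi
    simp
  · intro j hj
    exact hP j (Finset.mem_Icc.1 hj).2

end

end PrincipalProof

theorem principal_slice_map_symmetric {𝕂 : Type*} [Field 𝕂] [IsAlgClosed 𝕂] [CharZero 𝕂]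
    (N : ℕ) :
    ∃ P : ℤ → (Fin N → 𝕂) → Matrix (Fin N) (Fin N) 𝕂,
      -- each `P_j` is a polynomial map of the diagonal entries
      (∀ j : ℤ, ∃ Q : (Fin N × Fin N) → MvPolynomial (Fin N) 𝕂,
        ∀ (d : Fin N → 𝕂) (r c : Fin N), P j d r c = MvPolynomial.eval d (Q (r, c))) ∧
      -- `P_j` takes values in the `(−j)`-th subdiagonal `f^{(−j)}`
      (∀ j : ℤ, j ≤ 0 → ∀ (d : Fin N → 𝕂) (r c : Fin N),
        (r : ℕ) ≠ (c : ℕ) + (-j).toNat → P j d r c = 0) ∧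
      -- the value of `ε` lies in `e^reg + g^{f^reg}`
      (∀ d : Fin N → 𝕂,
        (∑ j ∈ Finset.Icc (-(N : ℤ)) 0, P j d) * freg 𝕂 N =
          freg 𝕂 N * (∑ j ∈ Finset.Icc (-(N : ℤ)) 0, P j d)) ∧
      -- `ε(e^reg + t)` is conjugate to `e^reg + t`
      (∀ d : Fin N → 𝕂, ∃ g : (Matrix (Fin N) (Fin N) 𝕂)ˣ,
        ereg 𝕂 N + ∑ j ∈ Finset.Icc (-(N : ℤ)) 0, P j d =
          (g : Matrix (Fin N) (Fin N) 𝕂) * (ereg 𝕂 N + Matrix.diagonal d) *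
            ((g⁻¹ : (Matrix (Fin N) (Fin N) 𝕂)ˣ) : Matrix (Fin N) (Fin N) 𝕂)) ∧
      -- each `P_j` is zero or homogeneous of degree `−j+1`
      (∀ j : ℤ, j ≤ 0 →
        (∀ d : Fin N → 𝕂, P j d = 0) ∨
        (∀ (d : Fin N → 𝕂) (lam : 𝕂), P j (lam • d) = lam ^ (1 - j).toNat • P j d)) ∧
      -- each `P_j` is symmetric in the eigenvalues of `t`
      (∀ (j : ℤ) (d : Fin N → 𝕂) (σ : Equiv.Perm (Fin N)), P j (d ∘ σ) = P j d) := by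
  have hsum := fun d : Fin N → 𝕂 => PrincipalProof.sum_P d
    (fun j => if j ≤ 0 then PrincipalProof.Cf 𝕂 N d (-j).toNat • freg 𝕂 N ^ (-j).toNat else 0)
    (fun j hj => if_pos hj)
  refine ⟨fun j d => if j ≤ 0 then
    PrincipalProof.Cf 𝕂 N d (-j).toNat • freg 𝕂 N ^ (-j).toNat else 0, ?_, ?_, ?_, ?_, ?_, ?_⟩
  · intro j
    obtain ⟨q, hq⟩ := PrincipalProof.Cf_poly (𝕂 := 𝕂) (N := N) (-j).toNat
    by_cases hj : j ≤ 0
    · refine ⟨fun p => q * MvPolynomial.C ((freg 𝕂 N ^ (-j).toNat) p.1 p.2), fun d r c => ?_⟩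
      simp [hj, hq]
    · exact ⟨0, fun d r c => by simp [hj]⟩
  · intro j hj d r c h
    simp only [if_pos hj]
    rw [Matrix.smul_apply, PrincipalProof.f_pow_apply, if_neg h, smul_zero]
  · intro d
    rw [hsum d, Finset.sum_mul, Finset.mul_sum]
    refine Finset.sum_congr rfl fun i _ => ?_
    rw [Matrix.smul_mul, Matrix.mul_smul, ← pow_succ, ← pow_succ']
  · intro d
    rw [hsum d]
    exact PrincipalProof.conj_slice d
  · intro j hj
    right
    intro d lam
    simp only [if_pos hj]
    rw [PrincipalProof.Cf_homog, mul_smul, show (1 - j).toNat = (-j).toNat + 1 by omega]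
  · intro j d σ
    simp only [PrincipalProof.Cf_symm]
end

section
/- Let x and y be diagonal N×N matrices and e^reg the regular nilpotent matrix. Then e^reg + x and e^reg + y are GL_N-conjugate if and only if there exists a permutation σ of {1,…,N} with y_{jj} = x_{σ(j)σ(j)} for all j (i.e. x and y have the same multiset of diagonal entries). -/
open PrincipalSetup

open Matrix Polynomial in
theorem charpoly_aux {𝕂 : Type*} [Field 𝕂] {N : ℕ} (d : Fin N → 𝕂) :
    (ereg 𝕂 N + Matrix.diagonal d).charpoly = ∏ i, (X - C (d i)) := by
  rw [Matrix.charpoly_of_isUpperTriangular]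
  · refine Finset.prod_congr rfl fun i _ => ?_
    simp [ereg]
  · intro i j hij
    have h1 : (j : ℕ) < i := hij
    have h2 : ¬ ((i : ℕ) + 1 = j) := by omega
    have h3 : i ≠ j := fun h => by subst h; omega
    simp [ereg, h2, Matrix.diagonal_apply_ne _ h3]

/-- The rows of the conjugating matrix. -/
def rowAux {𝕂 : Type*} [Field 𝕂] {N : ℕ} (A : Matrix (Fin N) (Fin N) 𝕂) (f : ℕ → 𝕂) :
    ℕ → Fin N → 𝕂
  | 0 => fun c => if (c : ℕ) = 0 then 1 else 0
  | k + 1 => Matrix.vecMul (rowAux A f k) (A - Matrix.scalar (Fin N) (f k))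

open Matrix Polynomial in
theorem rowAux_eq {𝕂 : Type*} [Field 𝕂] {N : ℕ} (A : Matrix (Fin N) (Fin N) 𝕂) (f : ℕ → 𝕂)
    (k : ℕ) : rowAux A f k =
      Matrix.vecMul (rowAux A f 0) (aeval A (∏ i ∈ Finset.range k, (X - C (f i)))) := by
  induction k with
  | zero => simp
  | succ k ih =>
    rw [Finset.prod_range_succ, map_mul, ← Matrix.vecMul_vecMul, ← ih, rowAux]
    simp [Matrix.algebraMap_eq_diagonal, Matrix.scalar_apply, Pi.algebraMap_def]

open Matrix in
theorem ereg_vecMul {𝕂 : Type*} [Field 𝕂] {N : ℕ} (d : Fin N → 𝕂) (v : Fin N → 𝕂) (c : Fin N) :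
    Matrix.vecMul v (ereg 𝕂 N + Matrix.diagonal d) c =
      (∑ r : Fin N, if (r : ℕ) + 1 = c then v r else 0) + v c * d c := by
  rw [Matrix.vecMul_add, Pi.add_apply, Matrix.vecMul_diagonal]
  simp [Matrix.vecMul, dotProduct, ereg]

theorem rowAux_tri {𝕂 : Type*} [Field 𝕂] {N : ℕ} (d : Fin N → 𝕂) (f : ℕ → 𝕂)
    (k : ℕ) (c : Fin N) (hc : k ≤ c) :
    rowAux (ereg 𝕂 N + Matrix.diagonal d) f k c = if (c : ℕ) = k then 1 else 0 := by
  induction k generalizing c with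
  | zero => rfl
  | succ k ih =>
    have hcN := c.2
    have h0 : rowAux (ereg 𝕂 N + Matrix.diagonal d) f k c = 0 := by
      rw [ih c (by omega), if_neg (by omega)]
    rw [rowAux, Matrix.vecMul_sub, Pi.sub_apply, ereg_vecMul, Matrix.scalar_apply,
      Matrix.vecMul_diagonal, h0]
    rw [Finset.sum_eq_single (⟨c - 1, by omega⟩ : Fin N)]
    · rw [if_pos (by simp; omega), ih _ (by simp; omega)]
      simp only [zero_mul, add_zero, sub_zero]
      congr 1
      simp
      omega
    · intro r _ hr
      rw [if_neg]
      intro h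
      apply hr
      ext
      simp
      omega
    · simp

theorem ereg_mul_row {𝕂 : Type*} [Field 𝕂] {N : ℕ} (d : Fin N → 𝕂) (w : ℕ → Fin N → 𝕂)
    (hw : w N = 0) (r c : Fin N) :
    ((ereg 𝕂 N + Matrix.diagonal d) * Matrix.of fun k : Fin N => w k) r c =
      w (r + 1) c + d r * w r c := by
  rw [Matrix.add_mul, Matrix.add_apply, Matrix.diagonal_mul, Matrix.mul_apply]
  congr 1
  by_cases h : (r : ℕ) + 1 < N
  · rw [Finset.sum_eq_single (⟨r + 1, h⟩ : Fin N)]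
    · simp [ereg]
    · intro j _ hj
      have : ¬ ((r : ℕ) + 1 = j) := fun h' => hj (by ext; simp [h'])
      simp [ereg, this]
    · simp
  · have hr := r.2
    have : (r : ℕ) + 1 = N := by omega
    rw [this, hw]
    apply Finset.sum_eq_zero
    intro j _
    have hj := j.2
    have : ¬ ((r : ℕ) + 1 = j) := by omega
    simp [ereg, this]


theorem ereg_add_diagonal_conjugate_iff_perm {𝕂 : Type*} [Field 𝕂] [IsAlgClosed 𝕂]
    [CharZero 𝕂] {N : ℕ} (d₁ d₂ : Fin N → 𝕂) :
    (∃ g : (Matrix (Fin N) (Fin N) 𝕂)ˣ,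
        ereg 𝕂 N + Matrix.diagonal d₂ =
          (g : Matrix (Fin N) (Fin N) 𝕂) * (ereg 𝕂 N + Matrix.diagonal d₁) *
            ((g⁻¹ : (Matrix (Fin N) (Fin N) 𝕂)ˣ) : Matrix (Fin N) (Fin N) 𝕂)) ↔
    (∃ σ : Equiv.Perm (Fin N), ∀ j : Fin N, d₂ j = d₁ (σ j)) := by
  constructor
  · rintro ⟨g, hg⟩
    have h := charpoly_aux d₂
    rw [hg, Matrix.coe_units_inv, Matrix.charpoly_units_conj, charpoly_aux] at h
    have h2 := congrArg Polynomial.roots h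
    have key : ∀ d : Fin N → 𝕂, (∏ i, (Polynomial.X - Polynomial.C (d i))).roots =
        Finset.univ.val.map d := by
      intro d
      rw [← Polynomial.roots_multiset_prod_X_sub_C (Finset.univ.val.map d), Multiset.map_map]
      rfl
    rw [key, key] at h2
    classical
    have hcard : ∀ a : 𝕂, Nonempty ({i // d₂ i = a} ≃ {i // d₁ i = a}) := by
      intro a
      have h3 := congrArg (Multiset.count a) h2
      rw [Multiset.count_map, Multiset.count_map] at h3
      apply Fintype.card_eq.1
      rw [Fintype.card_subtype, Fintype.card_subtype]
      simp only [eq_comm (a := a)] at h3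
      exact h3.symm
    exact ⟨Equiv.ofFiberEquiv fun a => (hcard a).some,
      fun j => (Equiv.ofFiberEquiv_map (fun a => (hcard a).some) j).symm⟩
  · rintro ⟨σ, hσ⟩
    set A := ereg 𝕂 N + Matrix.diagonal d₁ with hA
    let f : ℕ → 𝕂 := fun i => if h : i < N then d₂ ⟨i, h⟩ else 0
    have hf : ∀ i : Fin N, f i = d₂ i := fun i => by simp [f]
    have hN : rowAux A f N = 0 := by
      rw [rowAux_eq, Finset.prod_range]
      have : ∏ i : Fin N, (Polynomial.X - Polynomial.C (f i)) = A.charpoly := by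
        rw [hA, charpoly_aux]
        simp_rw [hf, hσ]
        exact Equiv.prod_comp σ fun i => Polynomial.X - Polynomial.C (d₁ i)
      rw [this, Matrix.aeval_self_charpoly, Matrix.vecMul_zero]
    let G : Matrix (Fin N) (Fin N) 𝕂 := Matrix.of fun k : Fin N => rowAux A f k
    have hdet : G.det = 1 := by
      rw [Matrix.det_of_isLowerTriangular]
      · apply Finset.prod_eq_one
        intro i _
        simp [G, hA, rowAux_tri d₁ f i i le_rfl]
      · intro i j hij
        have hij' : (i : ℕ) < j := hij
        simp only [G, Matrix.of_apply, hA]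
        rw [rowAux_tri d₁ f i j hij'.le, if_neg (by omega)]
    have hu : IsUnit G := (Matrix.isUnit_iff_isUnit_det G).2 (by rw [hdet]; exact isUnit_one)
    obtain ⟨g, hg⟩ := hu
    refine ⟨g, ?_⟩
    rw [Units.eq_mul_inv_iff_mul_eq, hg]
    ext r c
    rw [ereg_mul_row d₂ (rowAux A f) hN, rowAux, Matrix.vecMul_sub, Pi.sub_apply,
      Matrix.scalar_apply, Matrix.vecMul_diagonal, hf]
    change _ = Matrix.vecMul (rowAux A f r) A c
    ring
end

section
/- Let t be a diagonal N×N matrix and c an eigenvalue of t. In a Jordan normal form of e^reg + t there is exactly one Jordan block with eigenvalue c, and its size is m(t,c); equivalently, dim ker((e^reg + t − c·Id)^k) = min(k, m(t,c)) for every k ≥ 0. -/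
open PrincipalSetup

namespace PrincipalProof

open Polynomial in
lemma rootMult {𝕂 : Type*} [Field 𝕂] {N : ℕ} (g : Fin N → 𝕂) :
    (∏ i, (X - C (g i))).rootMultiplicity 0 = Nat.card {j : Fin N // g j = 0} := by
  classical
  rw [← count_roots, Polynomial.roots_prod _ _ (Finset.prod_ne_zero_iff.mpr
    fun i _ => X_sub_C_ne_zero _)]
  simp only [roots_X_sub_C]
  rw [Multiset.bind_singleton, Multiset.count_map, Nat.card_eq_fintype_card,
    Fintype.card_subtype, Finset.card_def, Finset.filter_val]
  congr 1
  apply Multiset.filter_congr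
  intro x _
  exact eq_comm

lemma finrank_ker_succ {𝕂 V : Type*} [Field 𝕂] [AddCommGroup V] [Module 𝕂 V]
    [FiniteDimensional 𝕂 V] (f : Module.End 𝕂 V) (k : ℕ) :
    Module.finrank 𝕂 (LinearMap.ker (f ^ (k + 1))) ≤
      Module.finrank 𝕂 (LinearMap.ker (f ^ k)) + Module.finrank 𝕂 (LinearMap.ker f) := by
  let g := (f ^ k).domRestrict (LinearMap.ker (f ^ (k + 1)))
  have h := g.finrank_range_add_finrank_ker
  have h1 : LinearMap.range g ≤ LinearMap.ker f := by
    rintro _ ⟨⟨x, hx⟩, rfl⟩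
    rw [LinearMap.mem_ker, pow_succ', Module.End.mul_apply] at hx
    simpa [g] using hx
  have h2 : (LinearMap.ker g).map (Submodule.subtype _) ≤ LinearMap.ker (f ^ k) := by
    rintro _ ⟨x, hx, rfl⟩
    exact hx
  have h3 := Submodule.finrank_mono h1
  have h4 := Submodule.finrank_mono h2
  rw [Submodule.finrank_map_subtype_eq] at h4
  omega

lemma finrank_ker_pow {𝕂 V : Type*} [Field 𝕂] [AddCommGroup V] [Module 𝕂 V]
    [FiniteDimensional 𝕂 V] (f : Module.End 𝕂 V)
    (h1 : Module.finrank 𝕂 (LinearMap.ker f) ≤ 1) (k : ℕ) :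
    Module.finrank 𝕂 (LinearMap.ker (f ^ k)) = min k (f.charpoly.rootMultiplicity 0) := by
  have htop : Module.finrank 𝕂 (LinearMap.ker (f ^ Module.finrank 𝕂 V)) =
      f.charpoly.rootMultiplicity 0 := by
    rw [← LinearMap.finrank_maxGenEigenspace_eq,
      Module.End.maxGenEigenspace_eq_genEigenspace_finrank, Module.End.genEigenspace_zero_nat]
  induction k with
  | zero =>
    rw [pow_zero, Module.End.one_eq_id, LinearMap.ker_id]
    simp
  | succ k ih =>
    have hs := finrank_ker_succ f k
    have hle : LinearMap.ker (f ^ k) ≤ LinearMap.ker (f ^ (k + 1)) := by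
      rw [pow_succ']
      exact LinearMap.ker_le_ker_comp _ _
    have hm := Submodule.finrank_mono hle
    have hb := Submodule.finrank_mono (Module.End.ker_pow_le_ker_pow_finrank f (k + 1))
    by_cases he : Module.finrank 𝕂 (LinearMap.ker (f ^ k)) =
        Module.finrank 𝕂 (LinearMap.ker (f ^ (k + 1)))
    · have hk := Submodule.eq_of_le_of_finrank_eq hle he
      have hc := Module.End.ker_pow_constant hk (Module.finrank 𝕂 V)
      have hd := Module.End.ker_pow_eq_ker_pow_finrank_of_le (f := f)
        (Nat.le_add_left (Module.finrank 𝕂 V) k)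
      rw [hc, hd] at he ih
      omega
    · omega

lemma entry {𝕂 : Type*} [Field 𝕂] {N : ℕ} (d : Fin N → 𝕂) (c : 𝕂) (i j : Fin N) :
    (ereg 𝕂 N + Matrix.diagonal d - c • (1 : Matrix (Fin N) (Fin N) 𝕂)) i j =
      (if (i : ℕ) + 1 = (j : ℕ) then 1 else 0) + (if i = j then d i - c else 0) := by
  simp only [ereg, Matrix.sub_apply, Matrix.add_apply, Matrix.of_apply, Matrix.diagonal_apply,
    Matrix.smul_apply, Matrix.one_apply, smul_eq_mul]
  by_cases h : i = j <;> simp [h]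

lemma ker_le {𝕂 : Type*} [Field 𝕂] {N : ℕ} (d : Fin N → 𝕂) (c : 𝕂) (hN : 0 < N) :
    Module.finrank 𝕂 (LinearMap.ker (Matrix.mulVecLin
      (ereg 𝕂 N + Matrix.diagonal d - c • (1 : Matrix (Fin N) (Fin N) 𝕂)))) ≤ 1 := by
  set A := ereg 𝕂 N + Matrix.diagonal d - c • (1 : Matrix (Fin N) (Fin N) 𝕂) with hA
  let g : LinearMap.ker A.mulVecLin →ₗ[𝕂] 𝕂 :=
    (LinearMap.proj (⟨0, hN⟩ : Fin N)).comp (Submodule.subtype _)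
  have hg : Function.Injective g := by
    rw [← LinearMap.ker_eq_bot, LinearMap.ker_eq_bot']
    rintro ⟨x, hx⟩ h0
    have h0 : x ⟨0, hN⟩ = 0 := h0
    have key : ∀ n (hn : n < N), x ⟨n, hn⟩ = 0 := by
      intro n
      induction n with
      | zero => intro _; exact h0
      | succ n ih =>
        intro hn
        have hx' : A.mulVec x = 0 := hx
        have := congrFun hx' ⟨n, by omega⟩
        simp only [Matrix.mulVec, dotProduct, hA, entry, add_mul, ite_mul, one_mul, zero_mul,
          Finset.sum_add_distrib, Finset.sum_ite_eq, Finset.mem_univ, if_true,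
          Pi.zero_apply, ih (by omega), mul_zero, add_zero] at this
        rw [Finset.sum_eq_single (⟨n + 1, hn⟩ : Fin N)] at this
        · simpa using this
        · intro b _ hb
          rw [if_neg]
          intro h
          exact hb (Fin.ext h.symm)
        · simp
    ext i
    exact key i i.2
  simpa using LinearMap.finrank_le_finrank_of_injective hg

end PrincipalProof

theorem jordan_block_of_ereg_add_diagonal {𝕂 : Type*} [Field 𝕂] [IsAlgClosed 𝕂]
    [CharZero 𝕂] {N : ℕ} (d : Fin N → 𝕂) (c : 𝕂) (hc : c ∈ Set.range d) :
    ∀ k : ℕ,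
      Module.finrank 𝕂
          (LinearMap.ker
            (Matrix.mulVecLin
              ((ereg 𝕂 N + Matrix.diagonal d - c • (1 : Matrix (Fin N) (Fin N) 𝕂)) ^ k))) =
        min k (Nat.card {j : Fin N // d j = c}) := by
  intro k
  obtain ⟨i, _⟩ := hc
  have hN : 0 < N := i.pos
  have h := PrincipalProof.finrank_ker_pow _ (PrincipalProof.ker_le d c hN) k
  rw [Matrix.charpoly_mulVecLin, Matrix.charpoly_of_isUpperTriangular, PrincipalProof.rootMult,
    ← Matrix.toLin'_apply', ← Matrix.toLin'_pow, Matrix.toLin'_apply'] at h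
  · rw [h]
    simp only [PrincipalProof.entry, if_true, Nat.succ_ne_self, if_false, zero_add, sub_eq_zero]
  · intro i j hij
    have hij : j < i := hij
    rw [PrincipalProof.entry, if_neg, if_neg, add_zero]
    · exact hij.ne'
    · have := Fin.lt_def.mp hij
      omega
end

section
/- Block version of the Jordan-form computation: let t ∈ h. Then the semisimple part of e + t is GL(V)-conjugate to t, and the nilpotent part n of e + t has Jordan type given by the integers m_i(t,c): for every k ≥ 0, dim ker(n^k) = Σ_{i=1}^{δ} Σ_{c ∈ 𝕂} min(k, m_i(t,c)) (the inner sum has finitely many nonzero terms). -/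
/-! Block version of the Jordan-form computation: for `t ∈ h`, the semisimple part of
`e + t` is conjugate to `t`, and the nilpotent part has Jordan type given by the
multiplicities `m_i(t,c)`. -/

namespace JordanBlockSetup

variable {𝕂 : Type*} [Field 𝕂] {δ : ℕ}

/-- The index set of the Jordan basis `{v_j^{(i)}}` attached to the partition `λ`. -/
abbrev Idx (lam : Fin δ → ℕ) := Σ i : Fin δ, Fin (lam i)

/-- The nilpotent element `e = Σ_i e_i`, `e·v_j^{(i)} = v_{j−1}^{(i)}`. -/
def eMat (𝕂 : Type*) [Field 𝕂] (lam : Fin δ → ℕ) : Matrix (Idx lam) (Idx lam) 𝕂 :=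
  Matrix.of fun r c => if r.1 = c.1 ∧ (r.2 : ℕ) + 1 = (c.2 : ℕ) then 1 else 0

/-- `m_i(t, c)`: the multiplicity of `c` as an eigenvalue of the `i`-th diagonal block. -/
noncomputable def mult (lam : Fin δ → ℕ) (d : Idx lam → 𝕂) (i : Fin δ) (c : 𝕂) : ℕ :=
  Nat.card {j : Fin (lam i) // d ⟨i, j⟩ = c}

/-- A matrix is semisimple iff it is diagonalizable. -/
def IsSemisimpleM {lam : Fin δ → ℕ} (x : Matrix (Idx lam) (Idx lam) 𝕂) : Prop :=
  ∃ (g : (Matrix (Idx lam) (Idx lam) 𝕂)ˣ) (dd : Idx lam → 𝕂),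
    (g : Matrix (Idx lam) (Idx lam) 𝕂) * x *
      ((g⁻¹ : (Matrix (Idx lam) (Idx lam) 𝕂)ˣ) : Matrix (Idx lam) (Idx lam) 𝕂) =
        Matrix.diagonal dd

end JordanBlockSetup

open JordanBlockSetup

namespace JBAux
open Matrix Module

variable {K : Type*} [Field K]

/-- nullity of a square matrix -/
noncomputable def nul {ι : Type*} [Fintype ι] (A : Matrix ι ι K) : ℕ :=
  finrank K (LinearMap.ker (Matrix.mulVecLin A))

lemma rank_add_nul {ι : Type*} [Fintype ι] (A : Matrix ι ι K) :
    A.rank + nul A = Fintype.card ι := by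
  have := LinearMap.finrank_range_add_finrank_ker (Matrix.mulVecLin A)
  rw [Module.finrank_fintype_fun_eq_card] at this
  exact this

lemma nul_conj {ι : Type*} [Fintype ι] [DecidableEq ι] (g : (Matrix ι ι K)ˣ) (A : Matrix ι ι K) :
    nul ((g : Matrix ι ι K) * A * ((g⁻¹ : (Matrix ι ι K)ˣ) : Matrix ι ι K)) = nul A := by
  have h1 := rank_add_nul A
  have h2 := rank_add_nul ((g : Matrix ι ι K) * A * ((g⁻¹ : (Matrix ι ι K)ˣ) : Matrix ι ι K))
  rw [rank_mul_eq_left_of_isUnit_det _ _ ((Matrix.isUnit_iff_isUnit_det _).1 (Units.isUnit _)),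
    rank_mul_eq_right_of_isUnit_det _ _ ((Matrix.isUnit_iff_isUnit_det _).1 (Units.isUnit _))] at h2
  omega

lemma nul_diagonal {ι : Type*} [Fintype ι] [DecidableEq ι] (w : ι → K) :
    nul (diagonal w) = Nat.card {i // w i = 0} := by
  classical
  have h := rank_add_nul (diagonal w)
  rw [rank_diagonal] at h
  have h2 := Fintype.card_subtype_compl (fun i => w i = 0)
  have h3 := Fintype.card_subtype_le (fun i => w i = 0)
  rw [Nat.card_eq_fintype_card]
  simp only [ne_eq] at h
  omega

/-- curry kernel -/
lemma blockDiagonal_mulVec {o : Type*} [Fintype o] [DecidableEq o] {m : o → Type*}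
    [∀ i, Fintype (m i)] (M : ∀ i, Matrix (m i) (m i) K) (y : (Σ i, m i) → K) (i : o) (j : m i) :
    (blockDiagonal' M *ᵥ y) ⟨i, j⟩ = (M i *ᵥ fun j => y ⟨i, j⟩) j := by
  simp only [mulVec, dotProduct]
  rw [Fintype.sum_sigma, Finset.sum_eq_single i]
  · simp
  · intro b _ hb
    simp [blockDiagonal'_apply_ne M _ _ hb.symm]
  · simp

lemma nul_blockDiagonal {o : Type*} [Fintype o] [DecidableEq o] {m : o → Type*}
    [∀ i, Fintype (m i)] (M : ∀ i, Matrix (m i) (m i) K) :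
    nul (blockDiagonal' M) = ∑ i, nul (M i) := by
  unfold nul
  rw [← Module.finrank_pi_fintype]
  refine LinearEquiv.finrank_eq
    { toFun := fun y i => ⟨fun j => y.1 ⟨i, j⟩, ?_⟩
      invFun := fun z => ⟨fun p => (z p.1).1 p.2, ?_⟩
      map_add' := fun _ _ => rfl
      map_smul' := fun _ _ => rfl
      left_inv := fun _ => rfl
      right_inv := fun _ => rfl }
  · have h := y.2
    rw [LinearMap.mem_ker, mulVecLin_apply] at h ⊢
    ext j
    rw [← blockDiagonal_mulVec, h]; rfl
  · rw [LinearMap.mem_ker, mulVecLin_apply]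
    ext ⟨i, j⟩
    rw [blockDiagonal_mulVec]
    have h := (z i).2
    rw [LinearMap.mem_ker, mulVecLin_apply] at h
    exact congrFun h j

/-- single block -/
def J {m : ℕ} (f : Fin m → K) : Matrix (Fin m) (Fin m) K :=
  (Matrix.of fun r c : Fin m => if (r : ℕ) + 1 = (c : ℕ) then 1 else 0) + diagonal f

lemma J_charpoly {m : ℕ} (f : Fin m → K) :
    (J f).charpoly = ∏ i, (Polynomial.X - Polynomial.C (f i)) := by
  rw [charpoly_of_isUpperTriangular]
  · simp [J]
  · intro i j hij
    have h : (j : ℕ) < i := hij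
    have h2 : i ≠ j := by rintro rfl; omega
    simp [J, h2]
    omega

lemma J_ker {m : ℕ} (f : Fin m → K) : nul (J f) ≤ 1 := by
  rcases m with _ | m
  · have := rank_add_nul (J f)
    simp at this; omega
  · unfold nul
    have hinj : Function.Injective
        ((LinearMap.proj (R := K) (φ := fun _ : Fin (m+1) => K) 0).comp
          (LinearMap.ker (mulVecLin (J f))).subtype) := by
      rw [← LinearMap.ker_eq_bot, LinearMap.ker_eq_bot']
      rintro ⟨y, hy⟩ h0
      rw [LinearMap.mem_ker, mulVecLin_apply] at hy
      have h0 : y 0 = 0 := h0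
      have key : ∀ n, ∀ hn : n < m + 1, y ⟨n, hn⟩ = 0 := by
        intro n
        induction n with
        | zero => intro _; exact h0
        | succ n ih =>
          intro hn
          have h1 := congrFun hy ⟨n, by omega⟩
          rw [J, add_mulVec] at h1
          rw [Pi.add_apply, mulVec_diagonal, ih, mul_zero, add_zero] at h1
          simp only [mulVec, dotProduct, of_apply, Pi.zero_apply] at h1
          rw [Finset.sum_eq_single ⟨n+1, hn⟩] at h1
          · simpa using h1
          · intro b _ hb
            rw [if_neg, zero_mul]
            intro h; apply hb; ext; exact h.symm
          · simp
      ext ⟨n, hn⟩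
      exact key n hn
    have := LinearMap.finrank_le_finrank_of_injective hinj
    simpa using this

lemma ker_pow_formula {V : Type*} [AddCommGroup V] [Module K V] [FiniteDimensional K V]
    (φ : End K V) (h1 : finrank K (LinearMap.ker φ) ≤ 1) (k : ℕ) :
    finrank K (LinearMap.ker (φ ^ k)) = min k (finrank K (φ.maxGenEigenspace 0)) := by
  have hmax : φ.maxGenEigenspace 0 = LinearMap.ker (φ ^ finrank K V) := by
    rw [End.maxGenEigenspace_eq_genEigenspace_finrank, End.genEigenspace_nat]
    simp
  have hstep : ∀ k, finrank K (LinearMap.ker (φ ^ (k+1))) ≤ finrank K (LinearMap.ker (φ ^ k)) + 1 := by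
    intro k
    have hm : ∀ x ∈ LinearMap.ker (φ ^ (k+1)), (φ ^ k) x ∈ LinearMap.ker φ := by
      intro x hx
      rw [LinearMap.mem_ker] at hx ⊢
      rw [← hx, pow_succ']; rfl
    have := LinearMap.finrank_range_add_finrank_ker ((φ ^ k).restrict hm)
    have h2 := Submodule.finrank_le (LinearMap.range ((φ ^ k).restrict hm))
    have h3 : finrank K (LinearMap.ker ((φ ^ k).restrict hm)) ≤ finrank K (LinearMap.ker (φ ^ k)) := by
      refine LinearMap.finrank_le_finrank_of_injective
        (f := LinearMap.restrict (LinearMap.ker (φ ^ (k+1))).subtype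
          (p := LinearMap.ker ((φ ^ k).restrict hm)) (q := LinearMap.ker (φ ^ k)) ?_) ?_
      · intro x hx
        rw [LinearMap.mem_ker] at hx ⊢
        exact congrArg Subtype.val hx
      · intro x y hxy
        have := congrArg Subtype.val hxy
        exact Subtype.ext (Subtype.ext this)
    omega
  have hmono : ∀ k, LinearMap.ker (φ ^ k) ≤ LinearMap.ker (φ ^ (k+1)) := by
    intro k x hx
    rw [LinearMap.mem_ker] at hx ⊢
    rw [pow_succ', End.mul_apply, hx, map_zero]
  have hle : ∀ k, finrank K (LinearMap.ker (φ ^ k)) ≤ finrank K (φ.maxGenEigenspace 0) := by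
    intro k
    rw [hmax]
    exact Submodule.finrank_mono (End.ker_pow_le_ker_pow_finrank φ k)
  induction k with
  | zero => simp [End.one_eq_id]
  | succ k ih =>
    by_cases he : LinearMap.ker (φ ^ k) = LinearMap.ker (φ ^ (k+1))
    · have hc := End.ker_pow_constant he
      have : finrank K (φ.maxGenEigenspace 0) = finrank K (LinearMap.ker (φ ^ k)) := by
        rw [hmax, hc (finrank K V), add_comm, ← End.ker_pow_eq_ker_pow_finrank_of_le (m := finrank K V + k) (by omega)]
      rw [← he]; omega
    · have := Submodule.finrank_lt_finrank_of_lt (lt_of_le_of_ne (hmono k) he)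
      have := hstep k
      have := hle (k+1)
      omega

lemma mulVecLin_pow' {ι : Type*} [Fintype ι] [DecidableEq ι] (A : Matrix ι ι K) (k : ℕ) :
    mulVecLin (A ^ k) = (mulVecLin A) ^ k := by
  rw [← toLin'_apply', ← toLin'_apply', toLin'_pow]

lemma nul_J_pow {m : ℕ} (f : Fin m → K) (k : ℕ) :
    nul ((J f) ^ k) = min k (Nat.card {j // f j = 0}) := by
  classical
  unfold nul
  rw [mulVecLin_pow', ker_pow_formula _ (J_ker f), LinearMap.finrank_maxGenEigenspace_eq]
  congr 1
  rw [← toLin'_apply', charpoly_toLin', J_charpoly, ← Polynomial.count_roots]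
  have h : ∏ i, (Polynomial.X - Polynomial.C (f i)) =
      ((Finset.univ.val.map f).map fun a => Polynomial.X - Polynomial.C a).prod := by
    rw [Multiset.map_map]; rfl
  rw [h, Polynomial.roots_multiset_prod_X_sub_C, Multiset.count_map, Nat.card_eq_fintype_card,
    Fintype.card_subtype]
  simp only [eq_comm (a := (0 : K))]
  rfl

section comm
variable {ι : Type*} [Fintype ι] [DecidableEq ι]

lemma pow_mulVec_of_ker {A B : Matrix ι ι K} (hc : A * B = B * A) (k : ℕ) (y : ι → K)
    (hy : A *ᵥ y = 0) : (A + B) ^ k *ᵥ y = B ^ k *ᵥ y := by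
  induction k generalizing y with
  | zero => simp
  | succ k ih =>
    rw [pow_succ, ← mulVec_mulVec, add_mulVec, hy, zero_add, ih, mulVec_mulVec, ← pow_succ]
    rw [mulVec_mulVec, hc, ← mulVec_mulVec, hy, mulVec_zero]

lemma diagonal_pow_ker {w : ι → K} {k : ℕ} {y : ι → K} (h : (diagonal w) ^ k *ᵥ y = 0) :
    diagonal w *ᵥ y = 0 := by
  rw [diagonal_pow] at h
  ext j
  have := congrFun h j
  rw [mulVec_diagonal] at this ⊢
  simp only [Pi.pow_apply, Pi.zero_apply, mul_eq_zero] at this ⊢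
  rcases this with h | h
  · exact Or.inl (by by_contra hne; exact pow_ne_zero _ hne h)
  · exact Or.inr h

lemma ker_aux {w : ι → K} {n : Matrix ι ι K} (hn : IsNilpotent n)
    (hc : diagonal w * n = n * diagonal w) (k : ℕ) (y : ι → K)
    (h : (diagonal w + n) ^ k *ᵥ y = 0) : diagonal w *ᵥ y = 0 := by
  obtain ⟨N, hN⟩ := hn
  induction k generalizing y with
  | zero =>
    have : y = 0 := by simpa using h
    simp [this]
  | succ k ih =>
    rw [pow_succ, ← mulVec_mulVec] at h
    have h1 := ih _ h
    have hcP : diagonal w * (diagonal w + n) = (diagonal w + n) * diagonal w := by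
      rw [mul_add, add_mul, hc]
    rw [mulVec_mulVec, hcP, ← mulVec_mulVec] at h1
    have h2 := pow_mulVec_of_ker (A := diagonal w + n) (B := -diagonal w)
      (by rw [mul_neg, neg_mul, hcP]) N _ h1
    rw [show diagonal w + n + -diagonal w = n by abel, hN, zero_mulVec] at h2
    have h3 : (diagonal w) ^ (N+1) *ᵥ y = 0 := by
      rw [pow_succ, ← mulVec_mulVec]
      rcases Nat.even_or_odd N with h | h
      · rw [h.neg_pow] at h2; exact h2.symm
      · rw [h.neg_pow, neg_mulVec, eq_comm, neg_eq_zero] at h2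
        exact h2
    exact diagonal_pow_ker h3

lemma ker_iff {w : ι → K} {n : Matrix ι ι K} (hn : IsNilpotent n)
    (hc : diagonal w * n = n * diagonal w) (k : ℕ) (y : ι → K) :
    (diagonal w + n) ^ k *ᵥ y = 0 ↔ diagonal w *ᵥ y = 0 ∧ n ^ k *ᵥ y = 0 := by
  constructor
  · intro h
    have h1 := ker_aux hn hc k y h
    exact ⟨h1, by rw [← pow_mulVec_of_ker hc k y h1, h]⟩
  · rintro ⟨h1, h2⟩
    rw [pow_mulVec_of_ker hc k y h1, h2]

lemma nul_congr {A B : Matrix ι ι K} (h : ∀ y, A *ᵥ y = 0 ↔ B *ᵥ y = 0) : nul A = nul B := by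
  unfold nul
  have : LinearMap.ker (mulVecLin A) = LinearMap.ker (mulVecLin B) := by
    ext y; simpa using h y
  rw [this]

/-- the matrix `diagonal dd - c` -/
lemma comm_fun {dd : ι → K} {n : Matrix ι ι K} (hc : diagonal dd * n = n * diagonal dd)
    (f : K → K) : diagonal (fun j => f (dd j)) * n = n * diagonal (fun j => f (dd j)) := by
  ext i j
  have h := congrFun (congrFun hc i) j
  rw [diagonal_mul, mul_diagonal] at h ⊢
  by_cases hij : dd i = dd j
  · rw [hij, mul_comm]
  · have : (dd i - dd j) * n i j = 0 := by rw [sub_mul, h]; ring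
    rcases mul_eq_zero.1 this with h | h
    · exact absurd (sub_eq_zero.1 h) hij
    · simp [h]

lemma nul_large {dd : ι → K} {n : Matrix ι ι K} (hc : diagonal dd * n = n * diagonal dd)
    {k : ℕ} (hk : n ^ k = 0) (c : K) :
    nul ((diagonal (fun j => dd j - c) + n) ^ k) = Nat.card {j // dd j = c} := by
  rw [nul_congr (B := diagonal (fun j => dd j - c)), nul_diagonal]
  · simp only [sub_eq_zero]
  · intro y
    rw [ker_iff ⟨k, hk⟩ (comm_fun hc (fun a => a - c))]
    simp [hk]

lemma nul_sum [DecidableEq K] {dd : ι → K} {n : Matrix ι ι K} (hn : IsNilpotent n)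
    (hc : diagonal dd * n = n * diagonal dd) (k : ℕ) :
    nul (n ^ k) = ∑ c ∈ Finset.univ.image dd, nul ((diagonal (fun j => dd j - c) + n) ^ k) := by
  rw [← Finset.sum_coe_sort]
  unfold nul
  rw [← Module.finrank_pi_fintype]
  have hmem : ∀ (c : K) (y : ι → K),
      y ∈ LinearMap.ker (mulVecLin ((diagonal (fun j => dd j - c) + n) ^ k)) ↔
      (∀ j, dd j ≠ c → y j = 0) ∧ n ^ k *ᵥ y = 0 := by
    intro c y
    rw [LinearMap.mem_ker, mulVecLin_apply, ker_iff hn (comm_fun hc (fun a => a - c))]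
    refine and_congr_left fun _ => ?_
    constructor
    · intro h j hj
      have := congrFun h j
      rw [mulVec_diagonal] at this
      exact (mul_eq_zero.1 this).resolve_left (sub_ne_zero.2 hj)
    · intro h
      ext j
      rw [mulVec_diagonal]
      by_cases hj : dd j = c
      · simp [hj]
      · simp [h j hj]
  have hcut : ∀ (c : K) (y : ι → K), n ^ k *ᵥ y = 0 →
      n ^ k *ᵥ (fun j => if dd j = c then y j else 0) = 0 := by
    intro c y hy
    have h1 := comm_fun hc (fun a => if a = c then 1 else 0)
    have h2 := (Commute.pow_right (show Commute _ n from h1) k).eq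
    have h3 : (fun j => if dd j = c then y j else 0) =
        diagonal (fun j => if dd j = c then (1 : K) else 0) *ᵥ y := by
      ext j; rw [mulVec_diagonal]; simp
    rw [h3, mulVec_mulVec, ← h2, ← mulVec_mulVec, hy, mulVec_zero]
  refine LinearEquiv.finrank_eq
    { toFun := fun y c => ⟨fun j => if dd j = c then y.1 j else 0, ?_⟩
      invFun := fun z => ⟨∑ c, (z c).1, ?_⟩
      map_add' := ?_
      map_smul' := ?_
      left_inv := ?_
      right_inv := ?_ }
  · rw [hmem]
    exact ⟨fun j hj => by simp [hj], hcut _ _ (LinearMap.mem_ker.1 y.2)⟩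
  · intro x y
    ext c j
    by_cases h : dd j = c <;> simp [h]
  · intro a y
    ext c j
    by_cases h : dd j = c <;> simp [h]
  · refine Submodule.sum_mem _ fun c _ => ?_
    rw [LinearMap.mem_ker, mulVecLin_apply]
    exact ((hmem _ _).1 (z c).2).2
  · intro y
    ext j
    simp only [Finset.sum_apply]
    rw [Finset.sum_eq_single ⟨dd j, by simp⟩]
    · simp
    · intro b _ hb
      rw [if_neg]
      intro h; exact hb (Subtype.ext h.symm)
    · simp
  · intro z
    ext c j
    simp only [Finset.sum_apply]
    by_cases h : dd j = c
    · rw [if_pos h, Finset.sum_eq_single c]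
      · intro b _ hb
        apply ((hmem _ _).1 (z b).2).1
        intro h2; exact hb (Subtype.ext (h2.symm.trans h))
      · simp
    · rw [if_neg h, ((hmem _ _).1 (z c).2).1 j h]

end comm

end JBAux

namespace JBAux
open Matrix Module

lemma sub_eq_block {K : Type*} [Field K] {δ : ℕ} (lam : Fin δ → ℕ) (d : Idx lam → K) (c : K) :
    eMat K lam + diagonal (fun j => d j - c) =
      blockDiagonal' (fun i => J (fun j => d ⟨i, j⟩ - c)) := by
  ext ⟨i, j⟩ ⟨i', j'⟩
  by_cases h : i = i'
  · subst h
    rw [blockDiagonal'_apply_eq]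
    by_cases hj : j = j'
    · subst hj
      simp [eMat, J]
    · have : (⟨i, j⟩ : Idx lam) ≠ ⟨i, j'⟩ := by
        intro h; simp at h; exact hj h
      simp [eMat, J, diagonal_apply_ne _ hj, diagonal_apply_ne _ this]
  · have : (⟨i, j⟩ : Idx lam) ≠ ⟨i', j'⟩ := by
      intro h'; simp at h'; exact h h'.1
    rw [blockDiagonal'_apply_ne _ _ _ h]
    simp [eMat, h, diagonal_apply_ne _ this]

lemma nul_block_pow {K : Type*} [Field K] {δ : ℕ} (lam : Fin δ → ℕ) (d : Idx lam → K) (c : K)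
    (k : ℕ) : nul ((eMat K lam + diagonal (fun j => d j - c)) ^ k) =
      ∑ i, min k (mult lam d i c) := by
  rw [sub_eq_block, ← blockDiagonal'_pow, nul_blockDiagonal]
  refine Finset.sum_congr rfl fun i _ => ?_
  rw [Pi.pow_apply, nul_J_pow]
  simp only [mult, sub_eq_zero]

lemma sum_mult {K : Type*} [Field K] {δ : ℕ} (lam : Fin δ → ℕ) (d : Idx lam → K) (c : K) :
    ∑ i, mult lam d i c = Nat.card {j // d j = c} := by
  classical
  simp only [mult]
  rw [← Nat.card_sigma]
  exact Nat.card_congr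
    { toFun := fun p => ⟨⟨p.1, p.2.1⟩, p.2.2⟩
      invFun := fun q => ⟨q.1.1, ⟨q.1.2, q.2⟩⟩
      left_inv := fun _ => rfl
      right_inv := fun _ => rfl }

lemma perm_conj {K : Type*} [Field K] {ι : Type*} [Fintype ι] [DecidableEq ι] (d dd : ι → K)
    (σ : ι ≃ ι) (h : ∀ i, dd (σ i) = d i) :
    ∃ p : (Matrix ι ι K)ˣ, (p : Matrix ι ι K) * diagonal d *
      ((p⁻¹ : (Matrix ι ι K)ˣ) : Matrix ι ι K) = diagonal dd := by
  have h1 : (1 : Matrix ι ι K).submatrix σ.symm id * (1 : Matrix ι ι K).submatrix id σ.symm = 1 := by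
    rw [← submatrix_mul _ _ _ _ _ Function.bijective_id, mul_one, submatrix_one_equiv]
  have h2 : (1 : Matrix ι ι K).submatrix id σ.symm * (1 : Matrix ι ι K).submatrix σ.symm id = 1 :=
    mul_eq_one_comm.1 h1
  refine ⟨⟨_, _, h1, h2⟩, ?_⟩
  change (1 : Matrix ι ι K).submatrix σ.symm id * diagonal d *
    (1 : Matrix ι ι K).submatrix id σ.symm = diagonal dd
  have h3 : diagonal d = (diagonal d).submatrix id id := rfl
  rw [h3, ← submatrix_mul _ _ _ _ _ Function.bijective_id,
    ← submatrix_mul _ _ _ _ _ Function.bijective_id, one_mul, mul_one, submatrix_diagonal_equiv]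
  congr 1
  ext i
  simp [← h]

end JBAux

theorem jordan_form_of_e_add_diagonal_blocks {𝕂 : Type*} [Field 𝕂] [IsAlgClosed 𝕂]
    [CharZero 𝕂] {δ : ℕ} (lam : Fin δ → ℕ) (hanti : Antitone lam) (hpos : ∀ i, 0 < lam i)
    (d : Idx lam → 𝕂) (s n : Matrix (Idx lam) (Idx lam) 𝕂)
    (hsd : IsSemisimpleM s) (hn : IsNilpotent n) (hcomm : s * n = n * s)
    (hx : eMat 𝕂 lam + Matrix.diagonal d = s + n) :
    (∃ g : (Matrix (Idx lam) (Idx lam) 𝕂)ˣ,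
        s = (g : Matrix (Idx lam) (Idx lam) 𝕂) * Matrix.diagonal d *
          ((g⁻¹ : (Matrix (Idx lam) (Idx lam) 𝕂)ˣ) : Matrix (Idx lam) (Idx lam) 𝕂)) ∧
    (∀ k : ℕ,
      Module.finrank 𝕂 (LinearMap.ker (Matrix.mulVecLin (n ^ k))) =
        ∑ i : Fin δ, ∑ᶠ c : 𝕂, min k (mult lam d i c)) := by
  classical
  obtain ⟨g, dd, hg⟩ := hsd
  set n' : Matrix (Idx lam) (Idx lam) 𝕂 := (g : Matrix (Idx lam) (Idx lam) 𝕂) * n *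
    ((g⁻¹ : (Matrix (Idx lam) (Idx lam) 𝕂)ˣ) : Matrix (Idx lam) (Idx lam) 𝕂) with hn'
  have hpow : ∀ (A : Matrix (Idx lam) (Idx lam) 𝕂) (k : ℕ),
      ((g : Matrix (Idx lam) (Idx lam) 𝕂) * A *
        ((g⁻¹ : (Matrix (Idx lam) (Idx lam) 𝕂)ˣ) : Matrix (Idx lam) (Idx lam) 𝕂)) ^ k =
      (g : Matrix (Idx lam) (Idx lam) 𝕂) * A ^ k *
        ((g⁻¹ : (Matrix (Idx lam) (Idx lam) 𝕂)ˣ) : Matrix (Idx lam) (Idx lam) 𝕂) :=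
    fun A k => Units.conj_pow g A k
  have hnil : IsNilpotent n' := by
    obtain ⟨N, hN⟩ := hn
    exact ⟨N, by rw [hn', hpow, hN]; simp⟩
  have hc : Matrix.diagonal dd * n' = n' * Matrix.diagonal dd := by
    rw [← hg, hn']
    simp only [mul_assoc, Units.inv_mul_cancel_left]
    rw [← mul_assoc s, ← mul_assoc n, hcomm]
  have hE : ∀ c : 𝕂, Matrix.diagonal (fun j => dd j - c) + n' =
      (g : Matrix (Idx lam) (Idx lam) 𝕂) *
        (eMat 𝕂 lam + Matrix.diagonal (fun j => d j - c)) *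
        ((g⁻¹ : (Matrix (Idx lam) (Idx lam) 𝕂)ˣ) : Matrix (Idx lam) (Idx lam) 𝕂) := by
    intro c
    have e1 : ∀ f : Idx lam → 𝕂, Matrix.diagonal (fun j => f j - c) =
        Matrix.diagonal f - c • (1 : Matrix (Idx lam) (Idx lam) 𝕂) := by
      intro f
      rw [Matrix.smul_one_eq_diagonal, Matrix.diagonal_sub]
    rw [e1, e1, ← add_sub_assoc, hx, mul_sub, sub_mul, mul_add, add_mul, hg, ← hn']
    simp only [mul_smul_comm, mul_one, smul_mul_assoc, Units.mul_inv]
    abel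
  have hnul : ∀ (c : 𝕂) (k : ℕ), JBAux.nul ((Matrix.diagonal (fun j => dd j - c) + n') ^ k) =
      ∑ i, min k (mult lam d i c) := by
    intro c k
    rw [hE, hpow, JBAux.nul_conj, JBAux.nul_block_pow]
  have hcard : ∀ c : 𝕂, Nat.card {j // d j = c} = Nat.card {j // dd j = c} := by
    intro c
    obtain ⟨N, hN⟩ := hnil
    have h0 : n' ^ (N + ∑ i, mult lam d i c) = 0 := by rw [pow_add, hN, zero_mul]
    rw [← JBAux.nul_large hc h0 c, hnul, ← JBAux.sum_mult]
    refine Finset.sum_congr rfl fun i _ => ?_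
    have := Finset.single_le_sum (f := fun i => mult lam d i c) (fun _ _ => Nat.zero_le _)
      (Finset.mem_univ i)
    omega
  have hσ : ∀ c : 𝕂, Nonempty ({j // d j = c} ≃ {j // dd j = c}) := fun c =>
    ⟨Fintype.equivOfCardEq (by simpa only [Nat.card_eq_fintype_card] using hcard c)⟩
  let σ : Idx lam ≃ Idx lam := Equiv.ofFiberEquiv (fun c => (hσ c).some)
  have hσd : ∀ i, dd (σ i) = d i := fun i => Equiv.ofFiberEquiv_map _ i
  constructor
  · obtain ⟨p, hp⟩ := JBAux.perm_conj d dd σ hσd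
    refine ⟨g⁻¹ * p, ?_⟩
    rw [mul_inv_rev, inv_inv, Units.val_mul, Units.val_mul]
    have : s = ((g⁻¹ : (Matrix (Idx lam) (Idx lam) 𝕂)ˣ) : Matrix (Idx lam) (Idx lam) 𝕂) *
        Matrix.diagonal dd * (g : Matrix (Idx lam) (Idx lam) 𝕂) := by
      rw [← hg]; simp [mul_assoc]
    rw [this, ← hp]
    simp only [mul_assoc]
  · intro k
    have himg : Finset.univ.image dd = Finset.univ.image d := by
      ext c
      simp only [Finset.mem_image, Finset.mem_univ, true_and]
      constructor
      · rintro ⟨j, rfl⟩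
        exact ⟨σ.symm j, by rw [← hσd]; simp⟩
      · rintro ⟨j, rfl⟩
        exact ⟨σ j, hσd j⟩
    change JBAux.nul (n ^ k) = _
    rw [← JBAux.nul_conj g, ← hpow, ← hn', JBAux.nul_sum hnil hc, himg]
    simp only [hnul]
    rw [Finset.sum_comm]
    refine Finset.sum_congr rfl fun i _ => ?_
    rw [finsum_eq_sum_of_support_subset]
    intro c hcs
    rw [Function.mem_support] at hcs
    have hm : mult lam d i c ≠ 0 := by
      intro h; apply hcs; simp [h]
    have hne : Nonempty {j : Fin (lam i) // d ⟨i, j⟩ = c} := (Nat.card_ne_zero.1 hm).1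
    obtain ⟨j, hj⟩ := hne
    simp only [Finset.coe_image, Finset.coe_univ, Set.image_univ]
    exact ⟨⟨i, j⟩, hj⟩
end

section
/- In type AIII, let s ∈ p be semisimple and g ∈ GL(V) be such that g s g⁻¹ ∈ p. Then g z g⁻¹ ∈ p for every z ∈ c_p(p^s)^•, where p^s := p ∩ g^s, c_p(p^s) := {z ∈ p : zw = wz for all w ∈ p^s}, and c_p(p^s)^• := {z ∈ c_p(p^s) : dim g^z ≤ dim g^{z′} for all z′ ∈ c_p(p^s)} is the set of elements of c_p(p^s) whose centralizer has minimal dimension. -/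
/-! In type AIII, if `g ∈ GL(V)` sends a semisimple `s ∈ p` into `p`, then `g` sends all of
`c_p(p^s)^•` into `p`. -/

namespace SymmetricPairAIII

variable {𝕂 : Type*} [Field 𝕂] {N : ℕ}

/-- `gl(V)` for `V = 𝕂^N`. -/
abbrev EndV (𝕂 : Type*) [Field 𝕂] (N : ℕ) := Module.End 𝕂 (Fin N → 𝕂)

/-- Semisimple = diagonalizable: the eigenspaces span `V`. -/
def IsSemisimpleE (x : EndV 𝕂 N) : Prop :=
  (⨆ c : 𝕂, LinearMap.ker (x - c • (1 : EndV 𝕂 N))) = ⊤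

/-- `p = Hom(V_a, V_b) ⊕ Hom(V_b, V_a)`, the `(-1)`-eigenspace of the type AIII involution. -/
def pAIII (Va Vb : Submodule 𝕂 (Fin N → 𝕂)) : Set (EndV 𝕂 N) :=
  {x | Submodule.map x Va ≤ Vb ∧ Submodule.map x Vb ≤ Va}

/-- The conjugation action `g.z = g z g⁻¹` of `GL(V)` on `gl(V)`. -/
def conjAct (g : (EndV 𝕂 N)ˣ) (z : EndV 𝕂 N) : EndV 𝕂 N :=
  (g : EndV 𝕂 N) * z * ((g⁻¹ : (EndV 𝕂 N)ˣ) : EndV 𝕂 N)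

/-- The centralizer `g^z` of `z`, as a subspace of `gl(V)` (used for its dimension). -/
def centSubE (z : EndV 𝕂 N) : Submodule 𝕂 (EndV 𝕂 N) :=
  LinearMap.ker (LinearMap.mulLeft 𝕂 z - LinearMap.mulRight 𝕂 z)

/-- `c_p(p^s)`: the elements of `p` centralizing `p^s = p ∩ g^s`. -/
def cpps (Va Vb : Submodule 𝕂 (Fin N → 𝕂)) (s : EndV 𝕂 N) : Set (EndV 𝕂 N) :=
  {z | z ∈ pAIII Va Vb ∧ ∀ w ∈ pAIII Va Vb, w * s = s * w → z * w = w * z}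

end SymmetricPairAIII

open SymmetricPairAIII

namespace SymmetricPairAIII

section RingLemmas

variable {R : Type*} [Ring R]

lemma ring_heus {e s u : R} (hs : e * s = -(s * e)) (hu : u * s = s * u) :
    (e * u * e) * s = s * (e * u * e) := by
  calc (e * u * e) * s = e * u * (e * s) := by noncomm_ring
    _ = -(e * (u * s) * e) := by rw [hs]; noncomm_ring
    _ = -((e * s) * u * e) := by rw [hu]; noncomm_ring
    _ = s * (e * u * e) := by rw [hs]; noncomm_ring

lemma ring_minus {e : R} (he : e * e = 1) (u : R) :
    e * (u - e * u * e) = -((u - e * u * e) * e) := by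
  calc e * (u - e * u * e) = e * u - (e * e) * u * e := by noncomm_ring
    _ = -(u * e - e * u * (e * e)) := by rw [he]; noncomm_ring
    _ = _ := by noncomm_ring

lemma ring_plus {e : R} (he : e * e = 1) (u : R) :
    e * (u + e * u * e) = (u + e * u * e) * e := by
  calc e * (u + e * u * e) = e * u + (e * e) * u * e := by noncomm_ring
    _ = u * e + e * u * (e * e) := by rw [he]; noncomm_ring
    _ = _ := by noncomm_ring

lemma ring_sk {e s k : R} (hs : e * s = -(s * e)) (hek : e * k = k * e) :
    e * (s * k) = -(s * k * e) := by
  calc e * (s * k) = (e * s) * k := by noncomm_ring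
    _ = -(s * (e * k)) := by rw [hs]; noncomm_ring
    _ = -(s * k * e) := by rw [hek]; noncomm_ring

lemma ring_two {z u m : R} (h1 : z * (u + m) = (u + m) * z) (h2 : z * (u - m) = (u - m) * z) :
    z * u + z * u = u * z + u * z := by
  calc z * u + z * u = z * (u + m) + z * (u - m) := by noncomm_ring
    _ = _ := by rw [h1, h2]; noncomm_ring

lemma ring_final {e s z G H : R} (he : e * e = 1) (hGH : G * H = 1) (hHG : H * G = 1)
    (hs : e * s = -(s * e)) (hz1 : e * z = -(z * e))
    (hgs : e * (G * s * H) = -(G * s * H * e))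
    (hc : ∀ u, u * s = s * u → z * u = u * z) :
    e * (G * z * H) = -(G * z * H * e) := by
  have hfs : (H * e * G) * s = -(s * (H * e * G)) := by
    calc (H * e * G) * s = H * e * G * s * (H * G) := by rw [hHG, mul_one]
      _ = H * (e * (G * s * H)) * G := by noncomm_ring
      _ = -((H * G) * s * (H * e * G)) := by rw [hgs]; noncomm_ring
      _ = _ := by rw [hHG, one_mul]
  have hu := hc ((H * e * G) * e) (by
    calc (H * e * G) * e * s = (H * e * G) * (e * s) := by noncomm_ring
      _ = -((H * e * G) * s * e) := by rw [hs]; noncomm_ring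
      _ = s * (H * e * G * e) := by rw [hfs]; noncomm_ring)
  have hfz : (H * e * G) * z = -(z * (H * e * G)) := by
    calc (H * e * G) * z = (H * e * G) * z * (e * e) := by rw [he, mul_one]
      _ = -((H * e * G) * (-(z * e)) * e) := by noncomm_ring
      _ = -((H * e * G * e) * z * e) := by rw [← hz1]; noncomm_ring
      _ = -(z * (H * e * G) * (e * e)) := by rw [← hu]; noncomm_ring
      _ = _ := by rw [he, mul_one]
  calc e * (G * z * H) = (G * H) * e * (G * z * H) := by rw [hGH, one_mul]
    _ = G * ((H * e * G) * z) * H := by noncomm_ring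
    _ = -(G * z * H * e * (G * H)) := by rw [hfz]; noncomm_ring
    _ = _ := by rw [hGH, mul_one]

end RingLemmas

/-- For diagonalizable `s`, `ker s + im s = V`. -/
lemma aux_sup {𝕂 : Type*} [Field 𝕂] {N : ℕ} (s : EndV 𝕂 N) (hss : IsSemisimpleE s) :
    LinearMap.ker s ⊔ LinearMap.range s = ⊤ := by
  rw [eq_top_iff, ← hss]
  refine iSup_le fun c v hv => ?_
  have hv' : s v = c • v := by
    simpa [sub_eq_zero] using hv
  by_cases hc : c = 0
  · apply Submodule.mem_sup_left
    simp [hv', hc]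
  · apply Submodule.mem_sup_right
    exact ⟨c⁻¹ • v, by rw [map_smul, hv', smul_smul, inv_mul_cancel₀ hc, one_smul]⟩

lemma aux_inf {𝕂 : Type*} [Field 𝕂] {N : ℕ} (s : EndV 𝕂 N) (hss : IsSemisimpleE s) :
    LinearMap.ker s ⊓ LinearMap.range s = ⊥ := by
  have h1 := Submodule.finrank_sup_add_finrank_inf_eq (LinearMap.ker s) (LinearMap.range s)
  have h2 := LinearMap.finrank_range_add_finrank_ker s
  rw [aux_sup s hss, finrank_top] at h1
  apply Submodule.finrank_eq_zero.mp
  omega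

/-- `x ∈ p` in terms of an involution `e`. -/
lemma mem_p_iff {𝕂 : Type*} [Field 𝕂] [CharZero 𝕂] {N : ℕ}
    {Va Vb : Submodule 𝕂 (Fin N → 𝕂)} (hVab : IsCompl Va Vb) (e : EndV 𝕂 N)
    (ha : ∀ v, v ∈ Va ↔ e v = v) (hb : ∀ v, v ∈ Vb ↔ e v = -v) (x : EndV 𝕂 N) :
    x ∈ pAIII Va Vb ↔ e * x = -(x * e) := by
  constructor
  · rintro ⟨h1, h2⟩
    rw [Submodule.map_le_iff_le_comap] at h1 h2
    refine LinearMap.ext fun v => ?_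
    have hv : v ∈ Va ⊔ Vb := by rw [hVab.sup_eq_top]; trivial
    obtain ⟨y, hy, w, hw, rfl⟩ := Submodule.mem_sup.mp hv
    have e1 := (hb _).mp (h1 hy)
    have e2 := (ha _).mp (h2 hw)
    have e3 := (ha _).mp hy
    have e4 := (hb _).mp hw
    simp only [Module.End.mul_apply, LinearMap.neg_apply, map_add, e3, e4, map_neg]
    rw [e1, e2]
    abel
  · intro h
    have h' : ∀ v, e (x v) = -(x (e v)) := fun v => by
      simpa using LinearMap.congr_fun h v
    constructor
    · rw [Submodule.map_le_iff_le_comap]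
      intro v hv
      rw [Submodule.mem_comap, hb, h', (ha v).mp hv]
    · rw [Submodule.map_le_iff_le_comap]
      intro v hv
      rw [Submodule.mem_comap, ha, h', (hb v).mp hv, map_neg, neg_neg]

lemma exists_invol {𝕂 : Type*} [Field 𝕂] [CharZero 𝕂] {N : ℕ}
    {Va Vb : Submodule 𝕂 (Fin N → 𝕂)} (hVab : IsCompl Va Vb) :
    ∃ e : EndV 𝕂 N, e * e = 1 ∧ (∀ v, v ∈ Va ↔ e v = v) ∧ (∀ v, v ∈ Vb ↔ e v = -v) := by
  have key : ∃ e : EndV 𝕂 N, (∀ v ∈ Va, e v = v) ∧ (∀ v ∈ Vb, e v = -v) := by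
    refine ⟨LinearMap.ofIsCompl hVab Va.subtype (-Vb.subtype), fun v hv => ?_, fun v hv => ?_⟩
    · simpa using LinearMap.ofIsCompl_apply_left (φ := Va.subtype) (ψ := -Vb.subtype) hVab ⟨v, hv⟩
    · simpa using LinearMap.ofIsCompl_apply_right (φ := Va.subtype) (ψ := -Vb.subtype) hVab ⟨v, hv⟩
  obtain ⟨e, ha, hb⟩ := key
  have dec : ∀ v, ∃ a ∈ Va, ∃ b ∈ Vb, a + b = v := fun v => by
    have hv : v ∈ Va ⊔ Vb := by rw [hVab.sup_eq_top]; trivial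
    exact Submodule.mem_sup.mp hv
  refine ⟨e, ?_, fun v => ⟨ha v, fun h => ?_⟩, fun v => ⟨hb v, fun h => ?_⟩⟩
  · refine LinearMap.ext fun v => ?_
    obtain ⟨a, h1, b, h2, rfl⟩ := dec v
    simp [ha a h1, hb b h2]
  · obtain ⟨a, h1, b, h2, rfl⟩ := dec v
    rw [map_add, ha a h1, hb b h2] at h
    have : b = 0 := self_eq_neg.mp (add_left_cancel h).symm
    simpa [this] using h1
  · obtain ⟨a, h1, b, h2, rfl⟩ := dec v
    rw [map_add, ha a h1, hb b h2, neg_add] at h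
    have : a = 0 := self_eq_neg.mp (add_right_cancel h)
    simpa [this] using h2

/-- `z` kills the vectors of `ker s` on which the involution `e` is a sign `c`. -/
lemma aux_kill {𝕂 : Type*} [Field 𝕂] [CharZero 𝕂] {N : ℕ}
    (e s z : EndV 𝕂 N) (he : e * e = 1) (hs : e * s = -(s * e)) (hss : IsSemisimpleE s)
    (hz : e * z = -(z * e)) (hzs : z * s = s * z)
    (hc : ∀ w : EndV 𝕂 N, e * w = -(w * e) → w * s = s * w → z * w = w * z)
    (c : 𝕂) (v : Fin N → 𝕂) (hv : s v = 0) (hev : e v = c • v) (hcc : c * c = 1) :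
    z v = 0 := by
  by_contra hne
  have hsz : s (z v) = 0 := by
    have := LinearMap.congr_fun hzs v
    simp only [Module.End.mul_apply, hv, map_zero] at this
    exact this.symm
  have hez : e (z v) = -(c • z v) := by
    have := LinearMap.congr_fun hz v
    simpa [hev] using this
  have hnr : z v ∉ LinearMap.range s := fun h => by
    have : z v ∈ LinearMap.ker s ⊓ LinearMap.range s := ⟨hsz, h⟩
    rw [aux_inf s hss] at this
    exact hne this
  obtain ⟨φ, h1, h2⟩ := Submodule.exists_le_ker_of_notMem hnr
  have hφs : ∀ x, φ (s x) = 0 := fun x => h2 ⟨x, rfl⟩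
  -- `ψ x = φ (x - c e x)`
  let ψ : (Fin N → 𝕂) →ₗ[𝕂] 𝕂 := φ - c • (φ ∘ₗ e)
  have hψ : ∀ x, ψ x = φ x - c * φ (e x) := fun x => by simp [ψ]
  have hse : ∀ x, e (s x) = -(s (e x)) := fun x => by
    simpa using LinearMap.congr_fun hs x
  have hee : ∀ x, e (e x) = x := fun x => by
    simpa using LinearMap.congr_fun he x
  have hψs : ∀ x, ψ (s x) = 0 := fun x => by
    rw [hψ, hse, map_neg, hφs, hφs]; simp
  have hψe : ∀ x, ψ (e x) = -(c * ψ x) := fun x => by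
    rw [hψ, hψ, hee]
    linear_combination (-φ (e x)) * hcc
  have hw := hc (ψ.smulRight v) (by
    refine LinearMap.ext fun x => ?_
    simp only [Module.End.mul_apply, LinearMap.neg_apply, LinearMap.smulRight_apply, map_smul,
      hev, hψe, smul_smul, ← neg_smul]
    congr 1; ring) (by
    refine LinearMap.ext fun x => ?_
    simp [Module.End.mul_apply, hψs, hv])
  have := LinearMap.congr_fun hw v
  simp only [Module.End.mul_apply, LinearMap.smulRight_apply, map_smul] at this
  have h3 : ψ v = 0 := by
    rw [hψ, hev, map_smul, smul_eq_mul]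
    linear_combination (-φ v) * hcc
  have h4 : ψ (z v) = 2 * φ (z v) := by
    rw [hψ, hez, map_neg, map_smul, smul_eq_mul]
    linear_combination (φ (z v)) * hcc
  rw [h3, h4, zero_smul] at this
  rcases smul_eq_zero.mp this.symm with h | h
  · exact (mul_ne_zero two_ne_zero h1) h
  · exact hne (by rw [h, map_zero])

/-- `z` commutes with the whole centralizer of `s`. -/
lemma aux_comm {𝕂 : Type*} [Field 𝕂] [CharZero 𝕂] {N : ℕ}
    (e s z : EndV 𝕂 N) (he : e * e = 1) (hs : e * s = -(s * e)) (hss : IsSemisimpleE s)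
    (hz : e * z = -(z * e))
    (hc : ∀ w : EndV 𝕂 N, e * w = -(w * e) → w * s = s * w → z * w = w * z)
    (u : EndV 𝕂 N) (hu : u * s = s * u) : z * u = u * z := by
  have hzs : z * s = s * z := hc s hs rfl
  have hee : ∀ x, e (e x) = x := fun x => by
    simpa using LinearMap.congr_fun he x
  have hse : ∀ x, e (s x) = -(s (e x)) := fun x => by
    simpa using LinearMap.congr_fun hs x
  have hkill : ∀ v, s v = 0 → z v = 0 := by
    intro v hv
    have hsev : s (e v) = 0 := by
      have := hse v
      rw [hv, map_zero] at this
      exact neg_eq_zero.mp this.symm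
    have p1 := aux_kill e s z he hs hss hz hzs hc 1 (v + e v) (by simp [hv, hsev])
      (by simp [hee, add_comm]) (by ring)
    have p2 := aux_kill e s z he hs hss hz hzs hc (-1) (v - e v) (by simp [hv, hsev])
      (by simp [hee]) (by ring)
    have : z ((2 : 𝕂) • v) = 0 := by
      have h : (2 : 𝕂) • v = (v + e v) + (v - e v) := by rw [two_smul]; abel
      rw [h, map_add, p1, p2, add_zero]
    rw [map_smul] at this
    exact (smul_eq_zero.mp this).resolve_left two_ne_zero
  have heus : (e * u * e) * s = s * (e * u * e) := ring_heus hs hu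
  have hm : z * (u - e * u * e) = (u - e * u * e) * z := by
    refine hc _ (ring_minus he u) ?_
    rw [sub_mul, mul_sub, heus, hu]
  set k := u + e * u * e with hk
  have hks : k * s = s * k := by rw [hk, add_mul, mul_add, heus, hu]
  have hek : e * k = k * e := ring_plus he u
  have hp : z * (s * k) = (s * k) * z := by
    refine hc _ (ring_sk hs hek) ?_
    rw [mul_assoc, hks]
  have hkz : z * k = k * z := by
    refine LinearMap.ext fun v => ?_
    have hv : v ∈ LinearMap.ker s ⊔ LinearMap.range s := by rw [aux_sup s hss]; trivial
    obtain ⟨a, h1, b, ⟨y, rfl⟩, rfl⟩ := Submodule.mem_sup.mp hv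
    have h1' : s a = 0 := h1
    have q1 : z (k a) = 0 := hkill _ (by
      have := LinearMap.congr_fun hks a
      simp only [Module.End.mul_apply, h1', map_zero] at this
      exact this.symm)
    have q2 : z (k (s y)) = k (z (s y)) := by
      have : z * k * s = k * z * s := by
        calc z * k * s = z * (k * s) := by noncomm_ring
          _ = (s * k) * z := by rw [hks, hp]
          _ = k * (s * z) := by rw [← hks]; noncomm_ring
          _ = k * z * s := by rw [← hzs]; noncomm_ring
      simpa using LinearMap.congr_fun this y
    simp only [Module.End.mul_apply, map_add, q1, q2, hkill a h1', map_zero]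
  have h2 : (2 : 𝕂) • (z * u) = (2 : 𝕂) • (u * z) := by
    rw [two_smul, two_smul]
    exact ring_two hkz hm
  exact smul_right_injective _ (two_ne_zero (α := 𝕂)) h2

end SymmetricPairAIII

theorem conj_of_regular_in_cpps_typeAIII {𝕂 : Type*} [Field 𝕂] [IsAlgClosed 𝕂]
    [CharZero 𝕂] {N : ℕ}
    (Va Vb : Submodule 𝕂 (Fin N → 𝕂)) (hVab : IsCompl Va Vb)
    (s : EndV 𝕂 N) (hs : s ∈ pAIII Va Vb) (hss : IsSemisimpleE s)
    (g : (EndV 𝕂 N)ˣ) (hgs : conjAct g s ∈ pAIII Va Vb)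
    (z : EndV 𝕂 N) (hz : z ∈ cpps Va Vb s)
    (hzmin : ∀ z' ∈ cpps Va Vb s,
      Module.finrank 𝕂 (centSubE z) ≤ Module.finrank 𝕂 (centSubE z')) :
    conjAct g z ∈ pAIII Va Vb := by
  obtain ⟨e, he, ha, hb⟩ := exists_invol hVab
  have hp := mem_p_iff hVab e ha hb
  rw [hp] at hs hgs ⊢
  obtain ⟨hz1, hz2⟩ := hz
  rw [hp] at hz1
  have hc := aux_comm e s z he hs hss hz1 (fun w hw => hz2 w ((hp w).mpr hw))
  simp only [conjAct] at hgs ⊢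
  set G : EndV 𝕂 N := (g : EndV 𝕂 N) with hG
  set H : EndV 𝕂 N := ((g⁻¹ : (EndV 𝕂 N)ˣ) : EndV 𝕂 N) with hH
  have hGH : G * H = 1 := g.mul_inv
  have hHG : H * G = 1 := g.inv_mul
  exact ring_final he hGH hHG hs hz1 hgs hc
end
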